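/- arXiv:2006.14226 — 3 statements merged into one kernel-verified Lean document; each statement's English description precedes it below -/
import Mathlib

section
/- Let d, q ≥ 1 and let A and Ã be real d × q matrices. Suppose there is a partition I ∪ J = {1, …, d} with I and J nonempty such that every column of A_I, Ã_I, A_J and Ã_J is nonzero, where B_I denotes the submatrix of B formed by the rows with index in I. Let S = (S_1, …, S_q) and S̃ = (S̃_1, …, S̃_q) be random vectors with independent coordinates such that, for some ρ < 2, the law of every S_j and every S̃_j belongs to M^1_ρ. Let Q (resp. Q̃) be a probability measure on ℝ^d that factors as a product Q⁽I⁾ ⊗ Q⁽J⁾ (resp. Q̃⁽I⁾ ⊗ Q̃⁽J⁾) of a law on the I-coordinates and a law on the J-coordinates, and let R (resp. R̃) be the law of A·S (resp. Ã·S̃) on ℝ^d. If R * Q = R̃ * Q̃ (convolution of measures), then there exists m ∈ ℝ^d such that R̃ is the pushforward of R under x ↦ x − m, Q̃⁽I⁾ is the pushforward of Q⁽I⁾ under y ↦ y + m_I, and Q̃⁽J⁾ is the pushforward of Q⁽J⁾ under y ↦ y + m_J, where m_I and m_J denote the sub-vectors of m indexed by I and J. -/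
/- STATEMENT 1: identifiability up to translation for noisy ICA, Y = A·S + ε, under a
   partition I ∪ J of the coordinates such that all columns of A_I, Ã_I, A_J, Ã_J are
   nonzero, independent light-tailed sources, and noise that factors over I and J. -/

namespace Stmt1

open MeasureTheory

/-- Convolution of two measures: the law of the sum of independent draws. -/
noncomputable def mconv {E : Type*} [MeasurableSpace E] [Add E] (μ ν : Measure E) :
    Measure E :=
  (μ.prod ν).map (fun p => p.1 + p.2)

/-- Membership in M^1_ρ for a measure on ℝ. -/
def memM1 (μ : Measure ℝ) (ρ : ℝ) : Prop :=
  ∃ A B : ℝ, 0 < A ∧ 0 < B ∧ ∀ lam : ℝ,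
    ∫⁻ x, ENNReal.ofReal (Real.exp (lam * x)) ∂μ ≤
      ENNReal.ofReal (A * Real.exp (B * |lam| ^ ρ))

/-- Glue a vector indexed by I and a vector indexed by J into a vector indexed by
Fin d (junk value 0 outside I ∪ J). -/
def glue {d : ℕ} (I J : Finset (Fin d)) (x : ↥I → ℝ) (y : ↥J → ℝ) : Fin d → ℝ :=
  fun i => if h : i ∈ I then x ⟨i, h⟩ else if h' : i ∈ J then y ⟨i, h'⟩ else 0

section

open Filter Topology Metric

/-- Exponential growth of order at most `ρ`. -/
def HasGrowth (ρ : ℝ) (f : ℂ → ℂ) : Prop :=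
  ∃ K : ℝ, 0 ≤ K ∧ ∀ z, ‖f z‖ ≤ Real.exp (K * (1 + ‖z‖ ^ ρ))

lemma circleAverage_log_norm_nonneg {f : ℂ → ℂ} (hf : Differentiable ℂ f) (h0 : f 0 = 1)
    {R : ℝ} (hR : 0 < R) : 0 ≤ Real.circleAverage (fun z => Real.log ‖f z‖) 0 R := by
  have ha : AnalyticOnNhd ℂ f (closedBall 0 |R|) := fun z _ => hf.analyticAt z
  rw [ha.circleAverage_log_norm hR.ne' (by simp [h0])]
  simp only [h0, norm_one, Real.log_one, add_zero]
  refine finsum_nonneg fun u => ?_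
  by_cases hu : u ∈ closedBall (0 : ℂ) |R|
  · refine mul_nonneg (by exact_mod_cast MeromorphicOn.AnalyticOnNhd.divisor_nonneg ha u) ?_
    rw [zero_sub, norm_neg]
    rcases eq_or_ne u 0 with rfl | hu0
    · simp
    · apply Real.log_nonneg
      rw [← div_eq_mul_inv, one_le_div (norm_pos_iff.2 hu0)]
      simpa [abs_of_pos hR] using hu
  · simp [hu]

lemma circleIntegrable_log_norm_of_differentiable {f : ℂ → ℂ} (hf : Differentiable ℂ f) (R : ℝ) :
    CircleIntegrable (fun z => Real.log ‖f z‖) 0 R :=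
  MeromorphicOn.circleIntegrable_log_norm fun z _ => (hf.analyticAt z).meromorphicAt

lemma circleAverage_abs_log_norm_le {f : ℂ → ℂ} (hf : Differentiable ℂ f) (h0 : f 0 = 1)
    {R M : ℝ} (hR : 0 < R) (hM : 0 ≤ M) (hb : ∀ z ∈ sphere (0 : ℂ) R, ‖f z‖ ≤ Real.exp M) :
    Real.circleAverage (fun z => |Real.log ‖f z‖|) 0 R ≤ 2 * M := by
  have hi := circleIntegrable_log_norm_of_differentiable hf R
  have hc : CircleIntegrable (fun _ : ℂ => 2 * M) 0 R := circleIntegrable_const _ _ _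
  have key : Real.circleAverage (fun z => |Real.log ‖f z‖|) 0 R ≤
      Real.circleAverage ((fun _ => 2 * M) - fun z => Real.log ‖f z‖) 0 R := by
    refine Real.circleAverage_mono hi.abs (hc.sub hi) fun z hz => ?_
    rw [abs_of_pos hR] at hz
    have : Real.log ‖f z‖ ≤ M := by
      rcases eq_or_ne (f z) 0 with h | h
      · simpa [h] using hM
      · rw [Real.log_le_iff_le_exp (norm_pos_iff.2 h)]
        exact hb z hz
    simp only [Pi.sub_apply]
    rcases abs_cases (Real.log ‖f z‖) with h | h <;> linarith
  rw [Real.circleAverage_sub hc hi, Real.circleAverage_const] at key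
  linarith [circleAverage_log_norm_nonneg hf h0 hR]

/-- The real part of the logarithm of a quotient of entire functions is controlled on a disk by
the growth of these functions on a circle of twice the radius. -/
lemma re_le_of_eq_exp_mul {f g h : ℂ → ℂ} (hf : Differentiable ℂ f) (hg : Differentiable ℂ g)
    (hh : Differentiable ℂ h) (hf0 : f 0 = 1) (hg0 : g 0 = 1)
    (hfg : ∀ z, g z = Complex.exp (h z) * f z) {R M : ℝ} (hR : 0 < R) (hM : 0 ≤ M)
    (hbf : ∀ z ∈ sphere (0 : ℂ) R, ‖f z‖ ≤ Real.exp M)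
    (hbg : ∀ z ∈ sphere (0 : ℂ) R, ‖g z‖ ≤ Real.exp M) {w : ℂ} (hw : ‖w‖ ≤ R / 2) :
    (h w).re ≤ 12 * M := by
  have hhar : InnerProductSpace.HarmonicOnNhd (fun z => (h z).re) (closedBall 0 R) :=
    fun z _ => (hh.analyticAt z).harmonicAt_re
  have hwb : w ∈ ball (0 : ℂ) R := by
    rw [mem_ball_zero_iff]; linarith
  have hre : Continuous fun z => (h z).re := Complex.continuous_re.comp hh.continuous
  have hi : CircleIntegrable (fun z => (h z).re) 0 R := hre.continuousOn.circleIntegrable hR.le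
  have hkc : ContinuousOn (Complex.re ∘ herglotzRieszKernel 0 w) (sphere (0 : ℂ) |R|) :=
    Complex.continuous_re.comp_continuousOn
      (continuousOn_herglotzRieszKernel_sphere hwb)
  have h1 : (h w).re ≤ 3 * Real.circleAverage (fun z => |(h z).re|) 0 R := by
    have e1 := hhar.circleAverage_re_herglotzRieszKernel_smul hwb
    rw [← e1, ← smul_eq_mul, ← Real.circleAverage_fun_smul]
    refine Real.circleAverage_mono ?_ ?_ fun z hz => ?_
    · rw [abs_of_pos hR] at hkc
      exact (hkc.smul hre.continuousOn).circleIntegrable hR.le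
    · exact hi.abs.const_smul
    · rw [abs_of_pos hR] at hz
      have u1 := re_herglotzRieszKernel_le hz hwb
      have u2 := le_re_herglotzRieszKernel hz hwb
      simp only [sub_zero] at u1 u2
      have u3 : (R + ‖w‖) / (R - ‖w‖) ≤ 3 := by
        rw [div_le_iff₀ (by linarith)]; linarith
      have u4 : 0 ≤ (R - ‖w‖) / (R + ‖w‖) :=
        div_nonneg (by linarith) (by positivity)
      simp only [Pi.smul_apply', Function.comp_apply, herglotzRieszKernel_def, sub_zero,
        smul_eq_mul]
      calc ((z + w) / (z - w)).re * (h z).re ≤ ((z + w) / (z - w)).re * |(h z).re| := by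
            gcongr
            · linarith
            · exact le_abs_self _
        _ ≤ 3 * |(h z).re| := by gcongr; linarith
  have hA : AnalyticOnNhd ℂ f Set.univ := fun z _ => hf.analyticAt z
  have hcod : (fun z => |(h z).re|) =ᶠ[codiscreteWithin (sphere (0 : ℂ) |R|)]
      fun z => |Real.log ‖g z‖ - Real.log ‖f z‖| := by
    have := hA.preimage_zero_mem_codiscrete (x := 0) (by simp [hf0])
    refine Filter.codiscreteWithin_mono (Set.subset_univ _) ?_
    filter_upwards [this] with z hz
    have hz' : f z ≠ 0 := by simpa using hz
    rw [hfg, norm_mul, Complex.norm_exp, Real.log_mul (Real.exp_ne_zero _) (norm_ne_zero_iff.2 hz'),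
      Real.log_exp]
    simp
  have hif := circleIntegrable_log_norm_of_differentiable hf R
  have hig := circleIntegrable_log_norm_of_differentiable hg R
  have h2 : Real.circleAverage (fun z => |(h z).re|) 0 R ≤ 4 * M := by
    rw [Real.circleAverage_congr_codiscreteWithin hcod hR.ne']
    calc _ ≤ Real.circleAverage ((fun z => |Real.log ‖g z‖|) + fun z => |Real.log ‖f z‖|) 0 R := by
          refine Real.circleAverage_mono (hig.sub hif).abs (hig.abs.add hif.abs) fun z _ => ?_
          exact abs_sub _ _
      _ ≤ 4 * M := by
          have := Real.circleAverage_add hig.abs hif.abs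
          have hg' := circleAverage_abs_log_norm_le hg hg0 hR hM hbg
          have hf' := circleAverage_abs_log_norm_le hf hf0 hR hM hbf
          refine this.trans_le ((add_le_add hg' hf').trans ?_)
          linarith
  linarith

/-- An entire function that is `O(1 + ‖z‖ ^ ρ)` with `ρ < 2` is affine. -/
lemma eq_affine_of_growth {h : ℂ → ℂ} (hh : Differentiable ℂ h) {ρ C : ℝ} (hρ0 : 0 ≤ ρ)
    (hρ : ρ < 2) (hC : ∀ z, ‖h z‖ ≤ C * (1 + ‖z‖ ^ ρ)) :
    ∃ c, ∀ z, h z = h 0 + c * z := by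
  have hC0 : 0 ≤ C := by
    have := (norm_nonneg _).trans (hC 0)
    have h2 : 0 < 1 + ‖(0 : ℂ)‖ ^ ρ := by positivity
    exact nonneg_of_mul_nonneg_left this h2
  have hd2 : ∀ w, deriv (deriv h) w = 0 := by
    intro w
    have hbound : ∀ R : ℝ, max 1 ‖w‖ ≤ R →
        ‖iteratedDeriv 2 h w‖ ≤ 2 * C * (R ^ (-2 : ℝ) + 2 ^ ρ * R ^ (-(2 - ρ))) := by
      intro R hR
      have h1R : 1 ≤ R := (le_max_left _ _).trans hR
      have hwR : ‖w‖ ≤ R := (le_max_right _ _).trans hR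
      have hR0 : 0 < R := by linarith
      have := Complex.norm_iteratedDeriv_le_of_forall_mem_sphere_norm_le (c := w) (R := R)
        (C := C * (1 + (2 * R) ^ ρ)) 2 hR0 hh.diffContOnCl (fun z hz => by
          refine (hC z).trans ?_
          have : ‖z‖ ≤ 2 * R := by
            have : ‖z - w‖ = R := by simpa [dist_eq_norm] using hz
            calc ‖z‖ = ‖(z - w) + w‖ := by ring_nf
              _ ≤ ‖z - w‖ + ‖w‖ := norm_add_le _ _
              _ ≤ 2 * R := by linarith
          gcongr)
      refine this.trans (le_of_eq ?_)
      rw [neg_sub, Real.rpow_sub hR0, Real.rpow_neg hR0.le, Real.mul_rpow (by norm_num) hR0.le]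
      norm_num
      field_simp
    have hlim : Tendsto (fun R : ℝ => 2 * C * (R ^ (-2 : ℝ) + 2 ^ ρ * R ^ (-(2 - ρ)))) atTop
        (𝓝 (2 * C * (0 + 2 ^ ρ * 0))) :=
      ((tendsto_rpow_neg_atTop (by norm_num)).add
        ((tendsto_rpow_neg_atTop (by linarith)).const_mul _)).const_mul _
    have hle : ‖iteratedDeriv 2 h w‖ ≤ 2 * C * (0 + 2 ^ ρ * 0) :=
      ge_of_tendsto hlim (eventually_atTop.2 ⟨_, hbound⟩)
    rw [iteratedDeriv_succ, iteratedDeriv_one] at hle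
    simpa using hle
  have hd : Differentiable ℂ (deriv h) :=
    fun z => ((hh.analyticAt z).deriv).differentiableAt
  have hcst : ∀ z, deriv h z = deriv h 0 := fun z => is_const_of_deriv_eq_zero hd hd2 z 0
  refine ⟨deriv h 0, fun z => ?_⟩
  have hd3 : Differentiable ℂ fun z => h z - deriv h 0 * z := by fun_prop
  have := is_const_of_deriv_eq_zero hd3 (fun w => by
    have := ((hh w).hasDerivAt.sub ((hasDerivAt_id w).const_mul (deriv h 0))).deriv
    refine this.trans ?_
    simp [hcst w]) z 0
  simp only [mul_zero, sub_zero] at this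
  rw [← this]; ring

lemma eventually_ne_zero_of_entire {f : ℂ → ℂ} (hf : Differentiable ℂ f) {a : ℂ} (ha : f a ≠ 0)
    (z : ℂ) : ∀ᶠ y in 𝓝[≠] z, f y ≠ 0 := by
  rcases (hf.analyticAt z).eventually_eq_zero_or_eventually_ne_zero with h | h
  · have hA : AnalyticOnNhd ℂ f Set.univ := fun z _ => hf.analyticAt z
    exact (ha (hA.eqOn_zero_of_preconnected_of_eventuallyEq_zero isPreconnected_univ
      (Set.mem_univ z) h (Set.mem_univ a))).elim
  · exact h

lemma exists_eq_exp_mul {f g : ℂ → ℂ} (hf : Differentiable ℂ f) (hg : Differentiable ℂ g)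
    (hf0 : f 0 = 1) (hord : ∀ z, analyticOrderAt f z = analyticOrderAt g z) :
    ∃ h : ℂ → ℂ, Differentiable ℂ h ∧ ∀ z, g z = Complex.exp (h z) * f z := by
  have hne : ∀ z, ∀ᶠ y in 𝓝[≠] z, f y ≠ 0 :=
    eventually_ne_zero_of_entire hf (a := 0) (by simp [hf0])
  have hm : MeromorphicOn (g / f) Set.univ :=
    fun z _ => (hg.analyticAt z).meromorphicAt.div (hf.analyticAt z).meromorphicAt
  set E := toMeromorphicNFOn (g / f) Set.univ with hE
  have hNF : MeromorphicNFOn E Set.univ := meromorphicNFOn_toMeromorphicNFOn _ _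
  have hEord : ∀ z, meromorphicOrderAt E z = 0 := by
    intro z
    rw [hE, meromorphicOrderAt_toMeromorphicNFOn hm (Set.mem_univ z),
      meromorphicOrderAt_div (hg.analyticAt z).meromorphicAt (hf.analyticAt z).meromorphicAt,
      (hg.analyticAt z).meromorphicOrderAt_eq, (hf.analyticAt z).meromorphicOrderAt_eq, ← hord z]
    have : analyticOrderAt f z ≠ ⊤ := by
      rw [Ne, analyticOrderAt_eq_top]
      intro h
      obtain ⟨y, hy, hy'⟩ := ((hne z).and (h.filter_mono nhdsWithin_le_nhds)).exists
      exact hy hy'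
    lift analyticOrderAt f z to ℕ using this with n
    simp only [ENat.map_natCast]
    exact_mod_cast sub_self ((n : ℤ))
  have hEA : ∀ z, AnalyticAt ℂ E z := fun z =>
    (hNF (Set.mem_univ z)).meromorphicOrderAt_nonneg_iff_analyticAt.1 (hEord z).ge
  have hE0 : ∀ z, E z ≠ 0 := fun z =>
    (hNF (Set.mem_univ z)).meromorphicOrderAt_eq_zero_iff.1 (hEord z)
  have hEd : Differentiable ℂ E := fun z => (hEA z).differentiableAt
  have hEf : ∀ z, g z = E z * f z := by
    intro z
    have h1 : ∀ᶠ y in 𝓝[≠] z, g y = E y * f y := by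
      filter_upwards [hne z, hm.toMeromorphicNFOn_eq_self_on_nhdsNE (Set.mem_univ z)] with y hy hy'
      rw [hE, hy', Pi.div_apply, div_mul_cancel₀ _ hy]
    exact tendsto_nhds_unique_of_eventuallyEq
      (hg.continuous.continuousAt.tendsto.mono_left nhdsWithin_le_nhds)
      (((hEd.mul hf).continuous.continuousAt (x := z)).tendsto.mono_left nhdsWithin_le_nhds) h1
  have hLd : Differentiable ℂ fun z => deriv E z / E z := fun z =>
    (hEA z).deriv.differentiableAt.div (hEd z) (hE0 z)
  obtain ⟨L, hL⟩ := hLd.isExactOn_univ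
  have hLdd : Differentiable ℂ L := fun z => (hL z (Set.mem_univ z)).differentiableAt
  have hcst : ∀ z, E z * Complex.exp (-L z) = E 0 * Complex.exp (-L 0) := fun z =>
    is_const_of_deriv_eq_zero (f := fun z => E z * Complex.exp (-L z)) (by fun_prop) (fun w => by
      have := ((hEd w).hasDerivAt.mul (hL w (Set.mem_univ w)).neg.cexp).deriv
      refine this.trans ?_
      field_simp [hE0 w]
      ring) z 0
  obtain ⟨k, hk⟩ : ∃ k, Complex.exp k = E 0 * Complex.exp (-L 0) :=
    ⟨_, Complex.exp_log (mul_ne_zero (hE0 0) (Complex.exp_ne_zero _))⟩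
  refine ⟨fun z => L z + k, by fun_prop, fun z => ?_⟩
  rw [hEf, Complex.exp_add, hk, ← hcst z, Complex.exp_neg]
  field_simp [Complex.exp_ne_zero]

/-- Two entire functions of order less than two with the same zeros, counted with multiplicity,
and the same nonzero value at the origin differ by the exponential of a linear function. -/
lemma exists_eq_exp_linear_mul {f g : ℂ → ℂ} (hf : Differentiable ℂ f) (hg : Differentiable ℂ g)
    (hf0 : f 0 = 1) (hg0 : g 0 = 1) {ρ : ℝ} (hρ0 : 0 ≤ ρ) (hρ : ρ < 2)
    (hgf : HasGrowth ρ f) (hgg : HasGrowth ρ g)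
    (hord : ∀ z, analyticOrderAt f z = analyticOrderAt g z) :
    ∃ c : ℂ, ∀ z, g z = Complex.exp (c * z) * f z := by
  obtain ⟨h, hh, hfg⟩ := exists_eq_exp_mul hf hg hf0 hord
  obtain ⟨K₁, hK₁, hb₁⟩ := hgf
  obtain ⟨K₂, hK₂, hb₂⟩ := hgg
  set K := max K₁ K₂ + 1 with hKdef
  have hk1 : K₁ ≤ K := by linarith [le_max_left K₁ K₂]
  have hk2 : K₂ ≤ K := by linarith [le_max_right K₁ K₂]
  have hK : 0 < K := by linarith [le_max_left K₁ K₂]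
  have hbound : ∀ R : ℝ, 0 < R → ∀ z, ‖z‖ = R / 4 →
      ‖h z‖ ≤ 24 * (K * (1 + R ^ ρ)) + ‖h 0‖ * 3 := by
    intro R hR z hz
    have hM : 0 < K * (1 + R ^ ρ) := by positivity
    have hre : ∀ w ∈ ball (0 : ℂ) (R / 2), (h w).re ≤ 12 * (K * (1 + R ^ ρ)) := by
      intro w hw
      refine re_le_of_eq_exp_mul hf hg hh hf0 hg0 hfg hR hM.le ?_ ?_ (mem_ball_zero_iff.1 hw).le
      · intro y hy
        rw [mem_sphere_zero_iff_norm] at hy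
        refine (hb₁ y).trans ?_
        rw [hy]; gcongr
      · intro y hy
        rw [mem_sphere_zero_iff_norm] at hy
        refine (hb₂ y).trans ?_
        rw [hy]; gcongr
    have := Complex.borelCaratheodory (R := R / 2) (M := 12 * (K * (1 + R ^ ρ))) (z := z) (f := h)
      (by positivity) hh.differentiableOn hre (by positivity)
      (by rw [mem_ball_zero_iff, hz]; linarith)
    rw [hz] at this
    refine this.trans (le_of_eq ?_)
    field_simp
    ring
  obtain ⟨c, hc⟩ := eq_affine_of_growth hh (C := 24 * K * 4 ^ ρ + 24 * K + 3 * ‖h 0‖) hρ0 hρ (by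
    intro z
    rcases eq_or_ne z 0 with rfl | hz
    · have : (0 : ℝ) ≤ ‖(0 : ℂ)‖ ^ ρ := by positivity
      have h4 : (0 : ℝ) ≤ 4 ^ ρ := by positivity
      nlinarith [norm_nonneg (h 0), mul_nonneg hK.le h4, mul_nonneg (mul_nonneg hK.le h4) this,
        mul_nonneg hK.le this, mul_nonneg (norm_nonneg (h 0)) this]
    · have hz' : 0 < ‖z‖ := norm_pos_iff.2 hz
      have := hbound (4 * ‖z‖) (by positivity) z (by ring)
      refine this.trans ?_
      rw [Real.mul_rpow (by norm_num) hz'.le]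
      have h4 : (0 : ℝ) ≤ 4 ^ ρ := by positivity
      have h5 : (0 : ℝ) ≤ ‖z‖ ^ ρ := by positivity
      nlinarith [mul_nonneg hK.le h4, mul_nonneg hK.le h5, mul_nonneg (norm_nonneg (h 0)) h5])
  refine ⟨c, fun z => ?_⟩
  have h00 : Complex.exp (h 0) = 1 := by
    have := hfg 0
    rw [hf0, hg0, mul_one] at this
    exact this.symm
  rw [hfg, hc z, Complex.exp_add, h00, one_mul]
lemma eq_of_eq_on_imaginary {f g : ℂ → ℂ} (hf : Differentiable ℂ f) (hg : Differentiable ℂ g)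
    (h : ∀ᶠ τ : ℝ in 𝓝 0, f (τ * Complex.I) = g (τ * Complex.I)) (z : ℂ) : f z = g z := by
  by_contra hne
  have h1 := eventually_ne_zero_of_entire (f := fun z => f z - g z) (by fun_prop)
    (sub_ne_zero.2 hne) 0
  have h2 : Tendsto (fun τ : ℝ => (τ : ℂ) * Complex.I) (𝓝[≠] 0) (𝓝[≠] 0) := by
    refine tendsto_nhdsWithin_iff.2 ⟨?_, ?_⟩
    · have : Continuous fun τ : ℝ => (τ : ℂ) * Complex.I := by fun_prop
      simpa using (this.tendsto 0).mono_left nhdsWithin_le_nhds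
    · filter_upwards [self_mem_nhdsWithin] with τ hτ
      simpa using hτ
  obtain ⟨τ, h3, h4⟩ := ((h2.eventually h1).and (h.filter_mono nhdsWithin_le_nhds)).exists
  exact h3 (sub_eq_zero.2 h4)

lemma analyticOrderAt_eq_of_mul_eq {F G : ℂ → ℂ → ℂ}
    (hF1 : ∀ w, Differentiable ℂ fun z => F z w) (hF2 : ∀ z, Differentiable ℂ (F z))
    (hG1 : ∀ w, Differentiable ℂ fun z => G z w) (hG2 : ∀ z, Differentiable ℂ (G z))
    (hFne : ∀ z, ∃ w, F z w ≠ 0) (hGne : ∀ z, ∃ w, G z w ≠ 0)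
    (hid : ∀ z w, F z w * (G z 0 * G 0 w) = G z w * (F z 0 * F 0 w)) (z : ℂ) :
    analyticOrderAt (fun z => F z 0) z = analyticOrderAt (fun z => G z 0) z := by
  have ev {H : ℂ → ℂ → ℂ} (hH2 : ∀ z, Differentiable ℂ (H z)) (hH : ∀ z, ∃ w, H z w ≠ 0) (z : ℂ) :
      ∀ᶠ w in 𝓝[≠] 0, H z w ≠ 0 := by
    obtain ⟨a, ha⟩ := hH z
    exact eventually_ne_zero_of_entire (hH2 z) ha 0
  obtain ⟨w, ⟨h1, h2⟩, h3, h4⟩ := (((ev hF2 hFne z).and (ev hG2 hGne z)).and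
    ((ev hF2 hFne 0).and (ev hG2 hGne 0))).exists
  have key {H K : ℂ → ℂ → ℂ} (hH : ∀ w, Differentiable ℂ fun z => H z w)
      (hK : ∀ w, Differentiable ℂ fun z => K z w) (h1 : H z w ≠ 0) (h2 : K 0 w ≠ 0) :
      analyticOrderAt (fun z => H z w * (K z 0 * K 0 w)) z = analyticOrderAt (fun z => K z 0) z := by
    have e1 : analyticOrderAt (fun z => H z w * K 0 w) z = 0 :=
      (((hH w).mul_const (K 0 w)).analyticAt z).analyticOrderAt_eq_zero.2 (mul_ne_zero h1 h2)
    have e2 : (fun z => H z w * (K z 0 * K 0 w)) =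
        (fun z => H z w * K 0 w) * fun z => K z 0 := by
      ext z; simp only [Pi.mul_apply]; ring
    rw [e2, analyticOrderAt_mul (((hH w).mul_const (K 0 w)).analyticAt z) ((hK 0).analyticAt z),
      e1, zero_add]
  rw [← key hG1 hF1 h2 h3, ← key hF1 hG1 h1 h4]
  simp only [hid]

/-- If two entire functions of two variables, of order less than two along the axes, have the same
interaction part, then they differ on the diagonal by the exponential of a linear function. -/
lemma diag_eq_exp_linear_mul {F G : ℂ → ℂ → ℂ}
    (hF1 : ∀ w, Differentiable ℂ fun z => F z w) (hF2 : ∀ z, Differentiable ℂ (F z))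
    (hG1 : ∀ w, Differentiable ℂ fun z => G z w) (hG2 : ∀ z, Differentiable ℂ (G z))
    (hFd : Continuous fun z => F z z) (hGd : Continuous fun z => G z z)
    (hF0 : F 0 0 = 1) (hG0 : G 0 0 = 1) {ρ : ℝ} (hρ0 : 0 ≤ ρ) (hρ : ρ < 2)
    (hFg1 : HasGrowth ρ fun z => F z 0) (hFg2 : HasGrowth ρ (F 0))
    (hGg1 : HasGrowth ρ fun z => G z 0) (hGg2 : HasGrowth ρ (G 0))
    (hFne1 : ∀ z, ∃ w, F z w ≠ 0) (hGne1 : ∀ z, ∃ w, G z w ≠ 0)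
    (hFne2 : ∀ w, ∃ z, F z w ≠ 0) (hGne2 : ∀ w, ∃ z, G z w ≠ 0)
    (hid : ∀ᶠ τ : ℝ in 𝓝 0, ∀ᶠ σ : ℝ in 𝓝 0,
      F (τ * Complex.I) (σ * Complex.I) * (G (τ * Complex.I) 0 * G 0 (σ * Complex.I)) =
      G (τ * Complex.I) (σ * Complex.I) * (F (τ * Complex.I) 0 * F 0 (σ * Complex.I))) :
    ∃ c : ℂ, ∀ z, G z z = Complex.exp (c * z) * F z z := by
  have hid' : ∀ z w, F z w * (G z 0 * G 0 w) = G z w * (F z 0 * F 0 w) := by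
    intro z w
    refine eq_of_eq_on_imaginary (f := fun z => F z w * (G z 0 * G 0 w))
      (g := fun z => G z w * (F z 0 * F 0 w)) ((hF1 w).mul ((hG1 0).mul_const _))
      ((hG1 w).mul ((hF1 0).mul_const _)) ?_ z
    filter_upwards [hid] with τ hτ
    exact eq_of_eq_on_imaginary ((hF2 _).mul ((hG2 0).const_mul _))
      ((hG2 _).mul ((hF2 0).const_mul _)) hτ w
  obtain ⟨c₁, hc₁⟩ := exists_eq_exp_linear_mul (hF1 0) (hG1 0) hF0 hG0 hρ0 hρ hFg1 hGg1
    (analyticOrderAt_eq_of_mul_eq hF1 hF2 hG1 hG2 hFne1 hGne1 hid')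
  obtain ⟨c₂, hc₂⟩ := exists_eq_exp_linear_mul (hF2 0) (hG2 0) hF0 hG0 hρ0 hρ hFg2 hGg2
    (analyticOrderAt_eq_of_mul_eq (F := fun w z => F z w) (G := fun w z => G z w)
      hF2 hF1 hG2 hG1 hFne2 hGne2
      (fun w z => by rw [mul_comm (G 0 w), hid', mul_comm (F z 0)]))
  refine ⟨c₁ + c₂, fun z => ?_⟩
  have h1 := eventually_ne_zero_of_entire (hF1 0) (a := 0) (by simp [hF0]) z
  have h2 := eventually_ne_zero_of_entire (hF2 0) (a := 0) (by simp [hF0]) z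
  have h3 : ∀ᶠ y in 𝓝[≠] z, G y y = Complex.exp ((c₁ + c₂) * y) * F y y := by
    filter_upwards [h1, h2] with y h1 h2
    have := hid' y y
    rw [hc₁ y, hc₂] at this
    apply mul_right_cancel₀ (mul_ne_zero h1 h2)
    rw [← this, add_mul, Complex.exp_add]
    ring
  have hcont : Continuous fun y => Complex.exp ((c₁ + c₂) * y) * F y y :=
    Continuous.mul (by fun_prop) hFd
  exact tendsto_nhds_unique_of_eventuallyEq
    (hGd.continuousAt.tendsto.mono_left nhdsWithin_le_nhds)
    (hcont.continuousAt.tendsto.mono_left nhdsWithin_le_nhds) h3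
lemma HasGrowth.comp_mul {ρ : ℝ} {f : ℂ → ℂ} (hf : HasGrowth ρ f) (a : ℂ) :
    HasGrowth ρ fun z => f (a * z) := by
  obtain ⟨K, hK, hb⟩ := hf
  refine ⟨K * (1 + ‖a‖ ^ ρ), by positivity, fun z => (hb _).trans ?_⟩
  rw [norm_mul, Real.mul_rpow (norm_nonneg _) (norm_nonneg _), mul_assoc]
  have h1 : 0 ≤ ‖a‖ ^ ρ := by positivity
  have h2 : 0 ≤ ‖z‖ ^ ρ := by positivity
  gcongr
  nlinarith

lemma HasGrowth.prod {ρ : ℝ} {ι : Type*} (s : Finset ι) {f : ι → ℂ → ℂ}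
    (hf : ∀ i, HasGrowth ρ (f i)) : HasGrowth ρ fun z => ∏ i ∈ s, f i z := by
  choose K hK hb using hf
  refine ⟨∑ i ∈ s, K i, Finset.sum_nonneg fun i _ => hK i, fun z => ?_⟩
  rw [norm_prod, Finset.sum_mul, Real.exp_sum]
  exact Finset.prod_le_prod (fun _ _ => norm_nonneg _) fun i _ => hb i z

section Product

variable {ι : Type*} [Fintype ι]

lemma exists_prod_affine_ne_zero {φ : ι → ℂ → ℂ} (hφ : ∀ j, Differentiable ℂ (φ j))
    (hφ0 : ∀ j, φ j 0 = 1) (γ : ι → ℂ) {β : ι → ℂ} (hβ : ∀ j, β j ≠ 0) :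
    ∃ w, ∏ j, φ j (γ j + β j * w) ≠ 0 := by
  have : ∀ᶠ w in 𝓝[≠] (0 : ℂ), ∀ j, φ j (γ j + β j * w) ≠ 0 := by
    rw [eventually_all]
    intro j
    have hd : Differentiable ℂ fun w => φ j (γ j + β j * w) := (hφ j).comp (by fun_prop)
    refine eventually_ne_zero_of_entire hd (a := -γ j / β j) ?_ 0
    rw [mul_div_cancel₀ _ (hβ j), add_neg_cancel, hφ0]
    exact one_ne_zero
  obtain ⟨w, hw⟩ := this.exists
  exact ⟨w, Finset.prod_ne_zero_iff.2 fun j _ => hw j⟩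

lemma hasDerivAt_prod_comp_mul {φ : ι → ℂ → ℂ} (hφ : ∀ j, Differentiable ℂ (φ j))
    (hφ0 : ∀ j, φ j 0 = 1) (γ : ι → ℂ) :
    HasDerivAt (fun z => ∏ j, φ j (γ j * z)) (∑ j, deriv (φ j) 0 * γ j) 0 := by
  classical
  have h : ∀ j, HasDerivAt (fun z => φ j (γ j * z)) (deriv (φ j) 0 * γ j) 0 := by
    intro j
    have h1 : HasDerivAt (φ j) (deriv (φ j) 0) (γ j * 0) := by
      rw [mul_zero]; exact (hφ j 0).hasDerivAt
    have h2 : HasDerivAt (fun z => γ j * z) (γ j) 0 := by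
      simpa using (hasDerivAt_id (0 : ℂ)).const_mul (γ j)
    exact h1.comp 0 h2
  have := HasDerivAt.fun_finsetProd (u := Finset.univ) fun j _ => h j
  simpa [hφ0] using this

/-- Products of entire functions along nondegenerate linear forms in two variables are determined
by their interaction part, up to the exponential of an explicit linear function. -/
lemma prod_diag_eq_exp_linear_mul {φ φt : ι → ℂ → ℂ}
    (hφ : ∀ j, Differentiable ℂ (φ j)) (hφt : ∀ j, Differentiable ℂ (φt j))
    (hφ0 : ∀ j, φ j 0 = 1) (hφt0 : ∀ j, φt j 0 = 1) {ρ : ℝ} (hρ0 : 0 ≤ ρ) (hρ : ρ < 2)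
    (hg : ∀ j, HasGrowth ρ (φ j)) (hgt : ∀ j, HasGrowth ρ (φt j))
    {α β αt βt : ι → ℂ} (hα : ∀ j, α j ≠ 0) (hβ : ∀ j, β j ≠ 0)
    (hαt : ∀ j, αt j ≠ 0) (hβt : ∀ j, βt j ≠ 0)
    {F G : ℂ → ℂ → ℂ} (hF : F = fun z w => ∏ j, φ j (α j * z + β j * w))
    (hG : G = fun z w => ∏ j, φt j (αt j * z + βt j * w))
    (hid : ∀ᶠ τ : ℝ in 𝓝 0, ∀ᶠ σ : ℝ in 𝓝 0,
      F (τ * Complex.I) (σ * Complex.I) * (G (τ * Complex.I) 0 * G 0 (σ * Complex.I)) =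
      G (τ * Complex.I) (σ * Complex.I) * (F (τ * Complex.I) 0 * F 0 (σ * Complex.I))) (z : ℂ) :
    G z z = Complex.exp ((∑ j, deriv (φt j) 0 * (αt j + βt j) -
      ∑ j, deriv (φ j) 0 * (α j + β j)) * z) * F z z := by
  have aux {φ : ι → ℂ → ℂ} (hφ : ∀ j, Differentiable ℂ (φ j)) (hφ0 : ∀ j, φ j 0 = 1)
      (hg : ∀ j, HasGrowth ρ (φ j)) {α β : ι → ℂ} (hα : ∀ j, α j ≠ 0) (hβ : ∀ j, β j ≠ 0)
      {F : ℂ → ℂ → ℂ} (hF : F = fun z w => ∏ j, φ j (α j * z + β j * w)) :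
      (∀ w, Differentiable ℂ fun z => F z w) ∧ (∀ z, Differentiable ℂ (F z)) ∧
      (Continuous fun z => F z z) ∧ F 0 0 = 1 ∧ HasGrowth ρ (fun z => F z 0) ∧
      HasGrowth ρ (F 0) ∧ (∀ z, ∃ w, F z w ≠ 0) ∧ (∀ w, ∃ z, F z w ≠ 0) ∧
      HasDerivAt (fun z => F z z) (∑ j, deriv (φ j) 0 * (α j + β j)) 0 := by
    subst hF
    have hc : ∀ j, Continuous (φ j) := fun j => (hφ j).continuous
    refine ⟨fun w => ?_, fun z => ?_, ?_, ?_, ?_, ?_, fun z => ?_, fun w => ?_, ?_⟩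
    · exact Differentiable.fun_finsetProd fun j _ => (hφ j).comp (by fun_prop)
    · exact Differentiable.fun_finsetProd fun j _ => (hφ j).comp (by fun_prop)
    · fun_prop
    · simp [hφ0]
    · simpa using HasGrowth.prod Finset.univ fun j => (hg j).comp_mul (α j)
    · simpa using HasGrowth.prod Finset.univ fun j => (hg j).comp_mul (β j)
    · exact exists_prod_affine_ne_zero hφ hφ0 _ hβ
    · simp_rw [add_comm (α _ * _)]
      exact exists_prod_affine_ne_zero hφ hφ0 _ hα
    · simp_rw [← add_mul]
      exact hasDerivAt_prod_comp_mul hφ hφ0 _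
  obtain ⟨a1, a2, a3, a4, a5, a6, a7, a8, a9⟩ := aux hφ hφ0 hg hα hβ hF
  obtain ⟨b1, b2, b3, b4, b5, b6, b7, b8, b9⟩ := aux hφt hφt0 hgt hαt hβt hG
  obtain ⟨c, hc⟩ := diag_eq_exp_linear_mul a1 a2 b1 b2 a3 b3 a4 b4 hρ0 hρ a5 a6 b5 b6 a7 b7 a8 b8
    hid
  have hexp : HasDerivAt (fun z => Complex.exp (c * z)) c 0 := by
    simpa using ((hasDerivAt_id (0 : ℂ)).const_mul c).cexp
  have hder := hexp.mul a9
  have hfun : (fun z => G z z) = (fun z => Complex.exp (c * z)) * fun z => F z z := funext hc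
  rw [← hfun] at hder
  have hceq := b9.unique hder
  simp only [mul_zero, Complex.exp_zero, a4, mul_one, one_mul] at hceq
  rw [hc, hceq, add_sub_cancel_right]

end Product

open scoped Matrix

lemma dense_forall_dotProduct_mem {ι κ : Type*} [Fintype ι] [Countable κ] {v : κ → ι → ℝ}
    (hv : ∀ k, v k ≠ 0) {s : κ → Set ℝ} (ho : ∀ k, IsOpen (s k)) (hd : ∀ k, Dense (s k)) :
    Dense {t : ι → ℝ | ∀ k, v k ⬝ᵥ t ∈ s k} := by
  have hc : ∀ k, Continuous fun t : ι → ℝ => v k ⬝ᵥ t := fun k => by fun_prop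
  have : {t : ι → ℝ | ∀ k, v k ⬝ᵥ t ∈ s k} = ⋂ k, (fun t => v k ⬝ᵥ t) ⁻¹' s k := by
    ext; simp
  rw [this]
  refine dense_iInter_of_isOpen (fun k => (ho k).preimage (hc k)) fun k => (hd k).preimage ?_
  let L : (ι → ℝ) →ₗ[ℝ] ℝ := dotProductBilin ℝ ℝ (v k)
  have hL : Function.Surjective L := by
    refine LinearMap.surjective fun h => hv k ?_
    exact dotProduct_self_eq_zero.1 (LinearMap.congr_fun h (v k))
  exact L.isOpenMap_of_finiteDimensional hL

lemma dense_setOf_entire_mul_I_ne_zero {φ : ℂ → ℂ} (hφ : Differentiable ℂ φ) (hφ0 : φ 0 = 1) :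
    Dense {x : ℝ | φ (x * Complex.I) ≠ 0} := by
  rw [dense_iff_closure_eq, Set.eq_univ_iff_forall]
  intro x
  have h := eventually_ne_zero_of_entire hφ (a := 0) (by simp [hφ0]) (x * Complex.I)
  have h2 : Tendsto (fun y : ℝ => (y : ℂ) * Complex.I) (𝓝[≠] x) (𝓝[≠] (x * Complex.I)) := by
    refine tendsto_nhdsWithin_iff.2 ⟨?_, ?_⟩
    · have : Continuous fun τ : ℝ => (τ : ℂ) * Complex.I := by fun_prop
      exact (this.tendsto x).mono_left nhdsWithin_le_nhds
    · filter_upwards [self_mem_nhdsWithin] with τ hτ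
      simpa using hτ
  exact mem_closure_of_frequently_of_tendsto (h2.eventually h).frequently
    (tendsto_id.mono_left nhdsWithin_le_nhds)

/-- Identifiability at the level of characteristic functions: the signal part and the noise parts
are determined up to a common translation. -/
lemma exists_translation {ι κ₁ κ₂ : Type*} [Fintype ι] [Fintype κ₁] [Fintype κ₂]
    {φ φt : ι → ℂ → ℂ} (hφ : ∀ j, Differentiable ℂ (φ j)) (hφt : ∀ j, Differentiable ℂ (φt j))
    (hφ0 : ∀ j, φ j 0 = 1) (hφt0 : ∀ j, φt j 0 = 1) {ρ : ℝ} (hρ0 : 0 ≤ ρ) (hρ : ρ < 2)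
    (hg : ∀ j, HasGrowth ρ (φ j)) (hgt : ∀ j, HasGrowth ρ (φt j))
    {n nt : ι → ℝ} (hn : ∀ j, deriv (φ j) 0 = n j) (hnt : ∀ j, deriv (φt j) 0 = nt j)
    {a aₜ : ι → κ₁ → ℝ} {b bₜ : ι → κ₂ → ℝ} (ha : ∀ j, a j ≠ 0) (hat : ∀ j, aₜ j ≠ 0)
    (hb : ∀ j, b j ≠ 0) (hbt : ∀ j, bₜ j ≠ 0)
    {ψ₁ ψt₁ : (κ₁ → ℝ) → ℂ} {ψ₂ ψt₂ : (κ₂ → ℝ) → ℂ}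
    (hψ₁ : Continuous ψ₁) (hψt₁ : Continuous ψt₁) (hψ₂ : Continuous ψ₂) (hψt₂ : Continuous ψt₂)
    (hψ₁0 : ψ₁ 0 = 1) (hψt₁0 : ψt₁ 0 = 1) (hψ₂0 : ψ₂ 0 = 1) (hψt₂0 : ψt₂ 0 = 1)
    {P Pt : (κ₁ → ℝ) → (κ₂ → ℝ) → ℂ}
    (hP : P = fun t s => ∏ j, φ j (((a j ⬝ᵥ t + b j ⬝ᵥ s : ℝ) : ℂ) * Complex.I))
    (hPt : Pt = fun t s => ∏ j, φt j (((aₜ j ⬝ᵥ t + bₜ j ⬝ᵥ s : ℝ) : ℂ) * Complex.I))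
    (heq : ∀ t s, P t s * (ψ₁ t * ψ₂ s) = Pt t s * (ψt₁ t * ψt₂ s)) :
    ∃ (m₁ : κ₁ → ℝ) (m₂ : κ₂ → ℝ),
      (∀ t s, Pt t s = Complex.exp (-((m₁ ⬝ᵥ t + m₂ ⬝ᵥ s : ℝ) : ℂ) * Complex.I) * P t s) ∧
      (∀ t, ψt₁ t = Complex.exp ((m₁ ⬝ᵥ t : ℝ) * Complex.I) * ψ₁ t) ∧
      (∀ s, ψt₂ s = Complex.exp ((m₂ ⬝ᵥ s : ℝ) * Complex.I) * ψ₂ s) := by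
  have hφc : ∀ j, Continuous (φ j) := fun j => (hφ j).continuous
  have hφtc : ∀ j, Continuous (φt j) := fun j => (hφt j).continuous
  have hP00 : P 0 0 = 1 := by simp [hP, hφ0]
  have hPt00 : Pt 0 0 = 1 := by simp [hPt, hφt0]
  set m₁ : κ₁ → ℝ := ∑ j, n j • a j - ∑ j, nt j • aₜ j with hm₁
  set m₂ : κ₂ → ℝ := ∑ j, n j • b j - ∑ j, nt j • bₜ j with hm₂
  have hPc : Continuous fun p : (κ₁ → ℝ) × (κ₂ → ℝ) => P p.1 p.2 := by
    rw [hP]; fun_prop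
  have hPtc : Continuous fun p : (κ₁ → ℝ) × (κ₂ → ℝ) => Pt p.1 p.2 := by
    rw [hPt]; fun_prop
  have h1 : ∀ t s, Pt t s =
      Complex.exp (-((m₁ ⬝ᵥ t + m₂ ⬝ᵥ s : ℝ) : ℂ) * Complex.I) * P t s := by
    have hne : IsOpen {x : ℝ | x ≠ 0} := isOpen_ne
    have hned : Dense {x : ℝ | x ≠ 0} := dense_compl_singleton 0
    have hD₁ := dense_forall_dotProduct_mem (κ := ι ⊕ ι) (v := Sum.elim a aₜ)
      (by rintro (j | j); exacts [ha j, hat j]) (fun _ => hne) fun _ => hned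
    have hD₂ := dense_forall_dotProduct_mem (κ := ι ⊕ ι) (v := Sum.elim b bₜ)
      (by rintro (j | j); exacts [hb j, hbt j]) (fun _ => hne) fun _ => hned
    suffices h : (fun p : (κ₁ → ℝ) × (κ₂ → ℝ) => Pt p.1 p.2) = fun p =>
        Complex.exp (-((m₁ ⬝ᵥ p.1 + m₂ ⬝ᵥ p.2 : ℝ) : ℂ) * Complex.I) * P p.1 p.2 from
      fun t s => congrFun h (t, s)
    refine Continuous.ext_on (hD₁.prod hD₂) hPtc (Continuous.mul (by fun_prop) hPc) ?_
    rintro ⟨t, s⟩ ⟨ht, hs⟩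
    simp only [Set.mem_ofPred_eq, Sum.forall, Sum.elim_inl, Sum.elim_inr] at ht hs
    have hFP : ∀ τ σ : ℝ, ∏ j, φ j (((a j ⬝ᵥ t : ℝ) : ℂ) * (τ * Complex.I) +
        ((b j ⬝ᵥ s : ℝ) : ℂ) * (σ * Complex.I)) = P (τ • t) (σ • s) := by
      intro τ σ
      rw [hP]
      refine Finset.prod_congr rfl fun j _ => ?_
      simp only [dotProduct_smul, smul_eq_mul]
      push_cast
      ring_nf
    have hGP : ∀ τ σ : ℝ, ∏ j, φt j (((aₜ j ⬝ᵥ t : ℝ) : ℂ) * (τ * Complex.I) +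
        ((bₜ j ⬝ᵥ s : ℝ) : ℂ) * (σ * Complex.I)) = Pt (τ • t) (σ • s) := by
      intro τ σ
      rw [hPt]
      refine Finset.prod_congr rfl fun j _ => ?_
      simp only [dotProduct_smul, smul_eq_mul]
      push_cast
      ring_nf
    have key := prod_diag_eq_exp_linear_mul hφ hφt hφ0 hφt0 hρ0 hρ hg hgt
      (α := fun j => ((a j ⬝ᵥ t : ℝ) : ℂ)) (β := fun j => ((b j ⬝ᵥ s : ℝ) : ℂ))
      (αt := fun j => ((aₜ j ⬝ᵥ t : ℝ) : ℂ)) (βt := fun j => ((bₜ j ⬝ᵥ s : ℝ) : ℂ))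
      (fun j => by exact_mod_cast ht.1 j) (fun j => by exact_mod_cast hs.1 j)
      (fun j => by exact_mod_cast ht.2 j) (fun j => by exact_mod_cast hs.2 j) rfl rfl (by
        have e1 : ∀ᶠ τ : ℝ in 𝓝 0, ψt₁ (τ • t) ≠ 0 := by
          have : Continuous fun τ : ℝ => ψt₁ (τ • t) := by fun_prop
          exact this.continuousAt.eventually_ne (by simp [hψt₁0])
        have e2 : ∀ᶠ σ : ℝ in 𝓝 0, ψt₂ (σ • s) ≠ 0 := by
          have : Continuous fun σ : ℝ => ψt₂ (σ • s) := by fun_prop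
          exact this.continuousAt.eventually_ne (by simp [hψt₂0])
        filter_upwards [e1] with τ hτ
        filter_upwards [e2] with σ hσ
        have hF0 := hFP τ 0
        have h0F := hFP 0 σ
        have hG0 := hGP τ 0
        have h0G := hGP 0 σ
        simp only [Complex.ofReal_zero, zero_mul, zero_smul] at hF0 h0F hG0 h0G
        rw [hFP, hGP, hF0, h0F, hG0, h0G]
        have q1 := heq (τ • t) (σ • s)
        have q2 := heq (τ • t) 0
        have q3 := heq 0 (σ • s)
        simp only [hψ₁0, hψt₁0, hψ₂0, hψt₂0, one_mul, mul_one] at q2 q3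
        apply mul_right_cancel₀ (mul_ne_zero hτ hσ)
        calc P (τ • t) (σ • s) * (Pt (τ • t) 0 * Pt 0 (σ • s)) * (ψt₁ (τ • t) * ψt₂ (σ • s))
            = P (τ • t) (σ • s) * ((Pt (τ • t) 0 * ψt₁ (τ • t)) *
                (Pt 0 (σ • s) * ψt₂ (σ • s))) := by ring
          _ = (P (τ • t) (σ • s) * (ψ₁ (τ • t) * ψ₂ (σ • s))) *
                (P (τ • t) 0 * P 0 (σ • s)) := by rw [← q2, ← q3]; ring
          _ = _ := by rw [q1]; ring) Complex.I
    have hF1 := hFP 1 1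
    have hG1 := hGP 1 1
    simp only [Complex.ofReal_one, one_mul, one_smul] at hF1 hG1
    rw [hF1, hG1] at key
    simp only
    rw [key]
    congr 3
    simp only [hn, hnt, hm₁, hm₂, sub_dotProduct, sum_dotProduct, smul_dotProduct, smul_eq_mul,
      mul_add, Finset.sum_add_distrib]
    push_cast
    ring
  refine ⟨m₁, m₂, h1, ?_, ?_⟩
  · have hD := dense_forall_dotProduct_mem ha (s := fun j => {x : ℝ | φ j (x * Complex.I) ≠ 0})
      (fun j => isOpen_ne_fun (by fun_prop) continuous_const)
      fun j => dense_setOf_entire_mul_I_ne_zero (hφ j) (hφ0 j)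
    refine congrFun (Continuous.ext_on hD hψt₁ (Continuous.mul (by fun_prop) hψ₁) fun t ht => ?_)
    have hP0 : P t 0 ≠ 0 := by
      rw [hP]
      exact Finset.prod_ne_zero_iff.2 fun j _ => by simpa using ht j
    have := heq t 0
    rw [h1, hψ₂0, hψt₂0, mul_one, mul_one, dotProduct_zero, add_zero, neg_mul,
      Complex.exp_neg] at this
    field_simp [Complex.exp_ne_zero] at this
    rw [mul_comm, this]
  · have hD := dense_forall_dotProduct_mem hb (s := fun j => {x : ℝ | φ j (x * Complex.I) ≠ 0})
      (fun j => isOpen_ne_fun (by fun_prop) continuous_const)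
      fun j => dense_setOf_entire_mul_I_ne_zero (hφ j) (hφ0 j)
    refine congrFun (Continuous.ext_on hD hψt₂ (Continuous.mul (by fun_prop) hψ₂) fun s hs => ?_)
    have hP0 : P 0 s ≠ 0 := by
      rw [hP]
      exact Finset.prod_ne_zero_iff.2 fun j _ => by simpa using hs j
    have := heq 0 s
    rw [h1, hψ₁0, hψt₁0, one_mul, one_mul, dotProduct_zero, zero_add, neg_mul,
      Complex.exp_neg] at this
    field_simp [Complex.exp_ne_zero] at this
    rw [mul_comm, this]

open ProbabilityTheory

lemma memM1.integrable_exp_mul {μ : Measure ℝ} {ρ : ℝ} (h : memM1 μ ρ) (l : ℝ) :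
    Integrable (fun x => Real.exp (l * x)) μ := by
  obtain ⟨A, B, -, -, h⟩ := h
  refine ⟨by fun_prop, ?_⟩
  rw [hasFiniteIntegral_iff_ofReal (ae_of_all _ fun x => (Real.exp_pos _).le)]
  exact (h l).trans_lt ENNReal.ofReal_lt_top

lemma memM1.integrableExpSet_eq {μ : Measure ℝ} {ρ : ℝ} (h : memM1 μ ρ) :
    integrableExpSet id μ = Set.univ :=
  Set.eq_univ_of_forall fun l => h.integrable_exp_mul l

lemma memM1.hasDerivAt_complexMGF {μ : Measure ℝ} {ρ : ℝ} (h : memM1 μ ρ) (z : ℂ) :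
    HasDerivAt (complexMGF id μ) (∫ x : ℝ, x * Complex.exp (z * x) ∂μ) z := by
  simpa using ProbabilityTheory.hasDerivAt_complexMGF (X := id) (μ := μ) (z := z)
    (by simp [h.integrableExpSet_eq])

lemma memM1.deriv_complexMGF_zero {μ : Measure ℝ} {ρ : ℝ} (h : memM1 μ ρ) :
    deriv (complexMGF id μ) 0 = ((∫ x, x ∂μ : ℝ) : ℂ) := by
  rw [(h.hasDerivAt_complexMGF 0).deriv]
  simpa using integral_ofReal (𝕜 := ℂ) (f := fun x : ℝ => x) (μ := μ)

lemma memM1.exists_mgf_le {μ : Measure ℝ} {ρ : ℝ} (h : memM1 μ ρ) :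
    ∃ A B : ℝ, 0 < A ∧ 0 < B ∧ ∀ l, mgf id μ l ≤ A * Real.exp (B * |l| ^ ρ) := by
  have hi := h.integrable_exp_mul
  obtain ⟨A, B, hA, hB, h⟩ := h
  refine ⟨A, B, hA, hB, fun l => ?_⟩
  have := h l
  rw [← ofReal_integral_eq_lintegral_ofReal (hi l) (ae_of_all _ fun x => (Real.exp_pos _).le),
    ENNReal.ofReal_le_ofReal_iff (by positivity)] at this
  exact this

lemma memM1.hasGrowth_complexMGF {μ : Measure ℝ} {ρ : ℝ} (h : memM1 μ ρ) :
    HasGrowth (max ρ 0) (complexMGF id μ) := by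
  have hi := h.integrable_exp_mul
  obtain ⟨A, B, hA, hB, hmgf⟩ := h.exists_mgf_le
  refine ⟨|Real.log (2 * A)| + B, by positivity, fun z => norm_complexMGF_le_mgf.trans ?_⟩
  have hlog : Real.exp (|Real.log (2 * A)|) ≥ 2 * A := by
    calc 2 * A = Real.exp (Real.log (2 * A)) := (Real.exp_log (by positivity)).symm
      _ ≤ _ := Real.exp_le_exp.2 (le_abs_self _)
  have hz : 0 ≤ ‖z‖ ^ max ρ 0 := by positivity
  have key : mgf id μ z.re ≤ 2 * A * Real.exp (B * (1 + ‖z‖ ^ max ρ 0)) := by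
    rcases le_total |z.re| 1 with h1 | h1
    · have h2 : mgf id μ z.re ≤ mgf id μ 1 + mgf id μ (-1) := by
        simp only [mgf, id]
        rw [← integral_add (hi 1) (hi (-1))]
        refine integral_mono (hi _) ((hi 1).add (hi (-1))) fun x => ?_
        have h3 : z.re * x ≤ |x| := by
          calc z.re * x ≤ |z.re * x| := le_abs_self _
            _ = |z.re| * |x| := abs_mul _ _
            _ ≤ |x| := mul_le_of_le_one_left (abs_nonneg _) h1
        refine (Real.exp_le_exp.2 h3).trans ?_
        simpa using Real.exp_abs_le x
      have h4 := hmgf 1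
      have h5 := hmgf (-1)
      simp only [abs_neg, abs_one, Real.one_rpow, mul_one] at h4 h5
      have h6 : Real.exp B ≤ Real.exp (B * (1 + ‖z‖ ^ max ρ 0)) :=
        Real.exp_le_exp.2 (by nlinarith)
      nlinarith
    · have h2 : |z.re| ^ ρ ≤ ‖z‖ ^ max ρ 0 :=
        (Real.rpow_le_rpow_of_exponent_le h1 (le_max_left _ _)).trans
          (Real.rpow_le_rpow (abs_nonneg _) (Complex.abs_re_le_norm z) (le_max_right _ _))
      have h3 : Real.exp (B * |z.re| ^ ρ) ≤ Real.exp (B * (1 + ‖z‖ ^ max ρ 0)) :=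
        Real.exp_le_exp.2 (by nlinarith)
      have h4 := hmgf z.re
      have h5 := Real.exp_pos (B * |z.re| ^ ρ)
      nlinarith
  refine key.trans ?_
  calc 2 * A * Real.exp (B * (1 + ‖z‖ ^ max ρ 0))
      ≤ Real.exp (|Real.log (2 * A)|) * Real.exp (B * (1 + ‖z‖ ^ max ρ 0)) := by gcongr
    _ ≤ _ := by
      rw [← Real.exp_add]
      refine Real.exp_le_exp.2 ?_
      nlinarith [abs_nonneg (Real.log (2 * A))]

/-- Characteristic function of a measure on a finite power of `ℝ`. -/
noncomputable def cf {κ : Type*} [Fintype κ] (μ : Measure (κ → ℝ)) (t : κ → ℝ) : ℂ :=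
  ∫ x, Complex.exp (((t ⬝ᵥ x : ℝ) : ℂ) * Complex.I) ∂μ

section CharacteristicFunction

variable {κ : Type*} [Fintype κ]

@[fun_prop]
lemma measurable_dotProduct_right (t : κ → ℝ) : Measurable fun x : κ → ℝ => t ⬝ᵥ x := by
  simp only [dotProduct]; fun_prop

@[fun_prop]
lemma continuous_dotProduct_left (x : κ → ℝ) : Continuous fun t : κ → ℝ => t ⬝ᵥ x := by
  simp only [dotProduct]; fun_prop

lemma measure_ext_of_cf {μ ν : Measure (κ → ℝ)} [IsFiniteMeasure μ] [IsFiniteMeasure ν]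
    (h : ∀ t, cf μ t = cf ν t) : μ = ν := by
  classical
  refine Measure.ext_of_charFunDual <| funext fun L => ?_
  have hL : ∀ x, L x = (fun k => L (Pi.single k 1)) ⬝ᵥ x := fun x => by
    conv_lhs => rw [← Finset.univ_sum_single x]
    rw [map_sum]
    refine Finset.sum_congr rfl fun k _ => ?_
    rw [mul_comm, ← smul_eq_mul, ← map_smul, ← Pi.single_smul, smul_eq_mul, mul_one]
  have key : ∀ ν : Measure (κ → ℝ), charFunDual ν L = cf ν fun k => L (Pi.single k 1) :=
    fun ν => by
    rw [charFunDual_apply, cf]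
    exact integral_congr_ae (ae_of_all _ fun x => by dsimp only; rw [hL x])
  rw [key, key, h]

lemma continuous_cf (μ : Measure (κ → ℝ)) [IsFiniteMeasure μ] : Continuous (cf μ) := by
  refine continuous_of_dominated (bound := fun _ => 1) (fun t => by fun_prop)
    (fun t => ae_of_all _ fun x => ?_) (integrable_const _) (ae_of_all _ fun x => by fun_prop)
  rw [Complex.norm_exp_ofReal_mul_I]

lemma cf_zero (μ : Measure (κ → ℝ)) [IsProbabilityMeasure μ] : cf μ 0 = 1 := by
  simp [cf]

lemma cf_map_add_right (μ : Measure (κ → ℝ)) (m t : κ → ℝ) :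
    cf (μ.map fun x => x + m) t
      = Complex.exp (((m ⬝ᵥ t : ℝ) : ℂ) * Complex.I) * cf μ t := by
  rw [cf, integral_map (by fun_prop) (by fun_prop), cf, ← integral_const_mul]
  refine integral_congr_ae (ae_of_all _ fun x => ?_)
  simp only
  rw [← Complex.exp_add, dotProduct_add, dotProduct_comm m t]
  push_cast
  ring_nf

lemma cf_mconv (μ ν : Measure (κ → ℝ)) [SFinite μ] [SFinite ν] (t : κ → ℝ) :
    cf (mconv μ ν) t = cf μ t * cf ν t := by
  rw [cf, mconv, integral_map (by fun_prop) (by fun_prop), cf, cf, ← integral_prod_mul]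
  refine integral_congr_ae (ae_of_all _ fun x => ?_)
  simp only
  rw [← Complex.exp_add, dotProduct_add]
  push_cast
  ring_nf

lemma cf_map_mulVec {ι : Type*} [Fintype ι] (A : Matrix κ ι ℝ) (μ : ι → Measure ℝ)
    [∀ j, IsProbabilityMeasure (μ j)] (t : κ → ℝ) :
    cf ((Measure.pi μ).map fun s => A.mulVec s) t
      = ∏ j, complexMGF id (μ j) (((t ᵥ* A) j : ℝ) * Complex.I) := by
  have hA : Measurable fun s : ι → ℝ => A.mulVec s :=
    measurable_pi_iff.2 fun i => measurable_dotProduct_right (A i)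
  rw [cf, integral_map hA.aemeasurable (by fun_prop)]
  simp only [complexMGF, id]
  rw [← integral_fintype_prod_eq_prod]
  refine integral_congr_ae (ae_of_all _ fun x => ?_)
  simp only
  rw [← Complex.exp_sum, Matrix.dotProduct_mulVec, dotProduct]
  push_cast
  rw [Finset.sum_mul]
  congr 1
  exact Finset.sum_congr rfl fun j _ => by ring

end CharacteristicFunction

section Glue

variable {d : ℕ} {I J : Finset (Fin d)}

lemma glue_left (x : I → ℝ) (y : J → ℝ) (i : I) : glue I J x y i = x i := by
  simp [glue]

lemma glue_right (hdisj : Disjoint I J) (x : I → ℝ) (y : J → ℝ) (i : J) :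
    glue I J x y i = y i := by
  simp [glue, Finset.disjoint_right.1 hdisj i.2]

lemma glue_restrict (hIJ : I ∪ J = Finset.univ) (v : Fin d → ℝ) :
    glue I J (fun i => v i) (fun i => v i) = v := by
  funext i
  have : i ∈ I ∪ J := hIJ ▸ Finset.mem_univ i
  rcases Finset.mem_union.1 this with h | h <;> by_cases h' : i ∈ I <;> simp_all [glue]

lemma glue_dotProduct (hIJ : I ∪ J = Finset.univ) (hdisj : Disjoint I J)
    (x : I → ℝ) (y : J → ℝ) (v : Fin d → ℝ) :
    glue I J x y ⬝ᵥ v = (fun i : I => v i) ⬝ᵥ x + (fun i : J => v i) ⬝ᵥ y := by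
  simp only [dotProduct]
  rw [← hIJ, Finset.sum_union hdisj, ← Finset.sum_coe_sort I, ← Finset.sum_coe_sort J]
  simp [glue_left, glue_right hdisj, mul_comm]

lemma measurable_glue : Measurable fun p : (I → ℝ) × (J → ℝ) => glue I J p.1 p.2 := by
  refine measurable_pi_iff.2 fun i => ?_
  unfold glue
  split_ifs <;> fun_prop

lemma cf_map_glue (hIJ : I ∪ J = Finset.univ) (hdisj : Disjoint I J)
    (μ : Measure (I → ℝ)) (ν : Measure (J → ℝ)) [SFinite μ] [SFinite ν]
    (t : I → ℝ) (s : J → ℝ) :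
    cf ((μ.prod ν).map fun p => glue I J p.1 p.2) (glue I J t s) = cf μ t * cf ν s := by
  rw [cf, integral_map measurable_glue.aemeasurable (by fun_prop), cf, cf, ← integral_prod_mul]
  refine integral_congr_ae (ae_of_all _ fun x => ?_)
  simp only
  rw [← Complex.exp_add, glue_dotProduct hIJ hdisj]
  simp only [glue_left, glue_right hdisj, dotProduct_comm t, dotProduct_comm s]
  push_cast
  ring_nf

end Glue

end

theorem stmt1 (d q : ℕ) (hd : 1 ≤ d) (hq : 1 ≤ q)
    (A At : Matrix (Fin d) (Fin q) ℝ)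
    (I J : Finset (Fin d)) (hIJ : I ∪ J = Finset.univ) (hdisj : Disjoint I J)
    (hIne : I.Nonempty) (hJne : J.Nonempty)
    (hAI : ∀ j : Fin q, ∃ i ∈ I, A i j ≠ 0)
    (hAtI : ∀ j : Fin q, ∃ i ∈ I, At i j ≠ 0)
    (hAJ : ∀ j : Fin q, ∃ i ∈ J, A i j ≠ 0)
    (hAtJ : ∀ j : Fin q, ∃ i ∈ J, At i j ≠ 0)
    (μS μSt : Fin q → Measure ℝ)
    [∀ j, IsProbabilityMeasure (μS j)] [∀ j, IsProbabilityMeasure (μSt j)]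
    (ρ : ℝ) (hρ : ρ < 2)
    (hS : ∀ j, memM1 (μS j) ρ) (hSt : ∀ j, memM1 (μSt j) ρ)
    (QI QtI : Measure (↥I → ℝ)) (QJ QtJ : Measure (↥J → ℝ))
    [IsProbabilityMeasure QI] [IsProbabilityMeasure QtI]
    [IsProbabilityMeasure QJ] [IsProbabilityMeasure QtJ]
    (R Rt Q Qt : Measure (Fin d → ℝ))
    (hR : R = (Measure.pi μS).map (fun s => A.mulVec s))
    (hRt : Rt = (Measure.pi μSt).map (fun s => At.mulVec s))
    (hQ : Q = (QI.prod QJ).map (fun p => glue I J p.1 p.2))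
    (hQt : Qt = (QtI.prod QtJ).map (fun p => glue I J p.1 p.2))
    (heq : mconv R Q = mconv Rt Qt) :
    ∃ m : Fin d → ℝ,
      Rt = R.map (fun x => x - m) ∧
      QtI = QI.map (fun y => y + fun i => m i.1) ∧
      QtJ = QJ.map (fun y => y + fun i => m i.1) := by
  subst hR hRt hQ hQt
  have hmeas : ∀ B : Matrix (Fin d) (Fin q) ℝ, Measurable fun s : Fin q → ℝ => B.mulVec s :=
    fun B => measurable_pi_iff.2 fun i => measurable_dotProduct_right (B i)
  have := Measure.isProbabilityMeasure_map (μ := Measure.pi μS) (hmeas A).aemeasurable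
  have := Measure.isProbabilityMeasure_map (μ := Measure.pi μSt) (hmeas At).aemeasurable
  have := Measure.isProbabilityMeasure_map (μ := QI.prod QJ)
    (measurable_glue (I := I) (J := J)).aemeasurable
  have := Measure.isProbabilityMeasure_map (μ := QtI.prod QtJ)
    (measurable_glue (I := I) (J := J)).aemeasurable
  have hne : ∀ (K : Finset (Fin d)) (B : Matrix (Fin d) (Fin q) ℝ),
      (∀ j, ∃ i ∈ K, B i j ≠ 0) → ∀ j, (fun i : K => B i j) ≠ 0 := fun K B h j h0 => by
    obtain ⟨i, hi, hij⟩ := h j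
    exact hij (congrFun h0 ⟨i, hi⟩)
  have hcf : ∀ (B : Matrix (Fin d) (Fin q) ℝ) (μ : Fin q → Measure ℝ)
      [∀ j, IsProbabilityMeasure (μ j)] (t : I → ℝ) (s : J → ℝ),
      cf ((Measure.pi μ).map fun s => B.mulVec s) (glue I J t s)
        = ∏ j, ProbabilityTheory.complexMGF id (μ j)
          ((((fun i : I => B i j) ⬝ᵥ t + (fun i : J => B i j) ⬝ᵥ s : ℝ) : ℂ) * Complex.I) := by
    intro B μ _ t s
    rw [cf_map_mulVec]
    refine Finset.prod_congr rfl fun j _ => ?_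
    rw [← glue_dotProduct hIJ hdisj t s fun i => B i j]
    rfl
  obtain ⟨m₁, m₂, hP, hI, hJ⟩ := exists_translation
    (φ := fun j => ProbabilityTheory.complexMGF id (μS j))
    (φt := fun j => ProbabilityTheory.complexMGF id (μSt j))
    (fun j z => ((hS j).hasDerivAt_complexMGF z).differentiableAt)
    (fun j z => ((hSt j).hasDerivAt_complexMGF z).differentiableAt)
    (fun j => by simp [ProbabilityTheory.complexMGF]) (fun j => by simp [ProbabilityTheory.complexMGF])
    (le_max_right ρ 0) (max_lt hρ two_pos)
    (fun j => (hS j).hasGrowth_complexMGF) (fun j => (hSt j).hasGrowth_complexMGF)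
    (fun j => (hS j).deriv_complexMGF_zero) (fun j => (hSt j).deriv_complexMGF_zero)
    (hne I A hAI) (hne I At hAtI) (hne J A hAJ) (hne J At hAtJ)
    (continuous_cf QI) (continuous_cf QtI) (continuous_cf QJ) (continuous_cf QtJ)
    (cf_zero QI) (cf_zero QtI) (cf_zero QJ) (cf_zero QtJ) rfl rfl
    (fun t s => by
      have h := congrArg (fun ν => cf ν (glue I J t s)) heq
      simp only [cf_mconv, cf_map_glue hIJ hdisj, hcf] at h
      exact h)
  refine ⟨glue I J m₁ m₂, ?_, ?_, ?_⟩
  · simp only [sub_eq_add_neg]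
    have := Measure.isProbabilityMeasure_map (μ := (Measure.pi μS).map fun s => A.mulVec s)
      (f := fun x => x + -glue I J m₁ m₂) (by fun_prop)
    refine measure_ext_of_cf fun v => ?_
    rw [cf_map_add_right, neg_dotProduct, glue_dotProduct hIJ hdisj,
      dotProduct_comm _ m₁, dotProduct_comm _ m₂]
    have h := hP (fun i => v i) (fun i => v i)
    rw [← hcf, ← hcf, glue_restrict hIJ] at h
    rw [h]
    push_cast
    rfl
  · simp only [glue_left]
    have := Measure.isProbabilityMeasure_map (μ := QI) (f := fun x => x + m₁) (by fun_prop)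
    exact measure_ext_of_cf fun t => (hI t).trans (cf_map_add_right _ _ _).symm
  · simp only [glue_right hdisj]
    have := Measure.isProbabilityMeasure_map (μ := QJ) (f := fun x => x + m₂) (by fun_prop)
    exact measure_ext_of_cf fun t => (hJ t).trans (cf_map_add_right _ _ _).symm

end Stmt1
end

section
/- Let d1 ≥ 1 and let R⁽¹⁾ and R̃⁽¹⁾ be probability measures on ℝ^{d1} such that, for some ρ < 2, both belong to M^{d1}_ρ. Let R (resp. R̃) be the pushforward of R⁽¹⁾ (resp. R̃⁽¹⁾) under the diagonal map x ↦ (x, x) from ℝ^{d1} to ℝ^{d1} × ℝ^{d1}. Let Q = Q⁽¹⁾ ⊗ Q⁽²⁾ and Q̃ = Q̃⁽¹⁾ ⊗ Q̃⁽²⁾ be products of probability measures on ℝ^{d1}. If R * Q = R̃ * Q̃ (convolution of measures on ℝ^{2d1}), then there exists m = (m1, m2) ∈ ℝ^{d1} × ℝ^{d1} such that R̃ is the pushforward of R under x ↦ x − m, Q̃⁽¹⁾ is the pushforward of Q⁽¹⁾ under y ↦ y + m1, and Q̃⁽²⁾ is the pushforward of Q⁽²⁾ under y ↦ y + m2. 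-/
/- STATEMENT 2: identifiability up to translation for deconvolution with repeated
   measurements: X = (X⁽¹⁾, X⁽¹⁾) with X⁽¹⁾ ~ R⁽¹⁾ ∈ M^{d1}_ρ, ρ < 2, and unknown
   product noise. -/

namespace Stmt2

open MeasureTheory

/-- Convolution of two measures: the law of the sum of independent draws. -/
noncomputable def mconv {E : Type*} [MeasurableSpace E] [Add E] (μ ν : Measure E) :
    Measure E :=
  (μ.prod ν).map (fun p => p.1 + p.2)

/-- Membership in M^{d}_ρ (Euclidean norm on ℝ^d). -/
def memM {d : ℕ} (μ : Measure (Fin d → ℝ)) (ρ : ℝ) : Prop :=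
  ∃ A B : ℝ, 0 < A ∧ 0 < B ∧ ∀ lam : Fin d → ℝ,
    ∫⁻ x, ENNReal.ofReal (Real.exp (∑ a, lam a * x a)) ∂μ ≤
      ENNReal.ofReal (A * Real.exp (B * Real.sqrt (∑ a, lam a ^ 2) ^ ρ))

open Filter Topology in
/-- Two real-analytic functions whose quotient is locally multiplicative near `0` differ by an
exponential factor. -/
theorem eq_cexp_mul_of_eventually_mul {F G : ℝ → ℂ}
    (hF : AnalyticOnNhd ℝ F Set.univ) (hG : AnalyticOnNhd ℝ G Set.univ)
    (hF0 : F 0 = 1) (hG0 : G 0 = 1)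
    (h : ∀ᶠ u in 𝓝 (0 : ℝ), ∀ᶠ v in 𝓝 (0 : ℝ),
      F (u + v) * (G u * G v) = G (u + v) * (F u * F v)) (u : ℝ) :
    F u = Complex.exp ((deriv F 0 - deriv G 0) * u) * G u := by
  set c : ℂ := deriv F 0 - deriv G 0 with hc
  have dF (x : ℝ) : HasDerivAt F (deriv F x) x :=
    (hF x (Set.mem_univ x)).differentiableAt.hasDerivAt
  have dG (x : ℝ) : HasDerivAt G (deriv G x) x :=
    (hG x (Set.mem_univ x)).differentiableAt.hasDerivAt
  have ode : ∀ᶠ u in 𝓝 (0 : ℝ), deriv F u * G u - F u * deriv G u = c * (F u * G u) := by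
    filter_upwards [h] with u hu
    have dFu : HasDerivAt (fun v => F (u + v)) (deriv F u) 0 :=
      HasDerivAt.comp_const_add u 0 (by simpa using dF u)
    have dGu : HasDerivAt (fun v => G (u + v)) (deriv G u) 0 :=
      HasDerivAt.comp_const_add u 0 (by simpa using dG u)
    have key := (dFu.mul ((dG 0).const_mul (G u))).unique
      ((dGu.mul ((dF 0).const_mul (F u))).congr_of_eventuallyEq hu)
    simp only [add_zero, hF0, hG0, mul_one] at key
    rw [hc]
    linear_combination key
  have hGne : ∀ᶠ u in 𝓝 (0 : ℝ), G u ≠ 0 :=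
    (dG 0).continuousAt.eventually_ne (by simp [hG0])
  obtain ⟨δ, hδ, hball⟩ := Metric.eventually_nhds_iff_ball.1 (ode.and hGne)
  have dexp (x : ℝ) : HasDerivAt (fun x : ℝ => Complex.exp (c * x)) (Complex.exp (c * x) * c) x := by
    have := ((Complex.ofRealCLM.hasDerivAt (x := x)).const_mul c).cexp
    simpa using this
  have dq (x : ℝ) (hx : x ∈ Metric.ball (0 : ℝ) δ) :
      HasDerivAt (fun x => F x / (Complex.exp (c * x) * G x)) 0 x := by
    have hne : Complex.exp (c * x) * G x ≠ 0 := mul_ne_zero (Complex.exp_ne_zero _) (hball x hx).2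
    refine ((dF x).div ((dexp x).mul (dG x)) hne).congr_deriv ?_
    rw [div_eq_zero_iff]
    left
    simp only [Pi.mul_apply]
    linear_combination Complex.exp (c * x) * (hball x hx).1
  have hloc : F =ᶠ[𝓝 0] fun x : ℝ => Complex.exp (c * x) * G x := by
    filter_upwards [Metric.ball_mem_nhds 0 hδ] with x hx
    have := Metric.isOpen_ball.is_const_of_deriv_eq_zero
      (convex_ball (0 : ℝ) δ).isPreconnected
      (fun y hy => (dq y hy).differentiableAt.differentiableWithinAt)
      (fun y hy => (dq y hy).deriv) hx (Metric.mem_ball_self hδ)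
    have hne : Complex.exp (c * x) * G x ≠ 0 := mul_ne_zero (Complex.exp_ne_zero _) (hball x hx).2
    simpa [hF0, hG0, div_eq_one_iff_eq hne] using this
  have aexp : AnalyticOnNhd ℝ (fun x : ℝ => Complex.exp (c * x)) Set.univ := by
    intro x _
    have h1 : AnalyticAt ℝ (fun x : ℝ => c * (x : ℂ)) x :=
      analyticAt_const.mul (Complex.ofRealCLM.analyticAt x)
    exact analyticAt_cexp.restrictScalars.comp (f := fun x : ℝ => c * (x : ℂ)) h1
  exact congrFun (hF.eq_of_eventuallyEq (aexp.mul hG) hloc) u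

open Filter Topology in
/-- If `F (u + v) a(u) b(v) = G (u + v) a'(u) b'(v)` with `F`, `G` analytic and everything continuous
and normalized at `0`, then `F / G`, `a' / a` and `b' / b` are one and the same exponential. -/
theorem exp_factors_of_mul_eq {F G a b a' b' : ℝ → ℂ}
    (hF : AnalyticOnNhd ℝ F Set.univ) (hG : AnalyticOnNhd ℝ G Set.univ)
    (ha : Continuous a) (hb : Continuous b) (ha' : Continuous a') (hb' : Continuous b')
    (hF0 : F 0 = 1) (hG0 : G 0 = 1) (ha0 : a 0 = 1) (hb0 : b 0 = 1)
    (ha0' : a' 0 = 1) (hb0' : b' 0 = 1)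
    (h : ∀ u v, F (u + v) * (a u * b v) = G (u + v) * (a' u * b' v)) (u : ℝ) :
    F u = Complex.exp ((deriv F 0 - deriv G 0) * u) * G u ∧
      a' u = Complex.exp ((deriv F 0 - deriv G 0) * u) * a u ∧
      b' u = Complex.exp ((deriv F 0 - deriv G 0) * u) * b u := by
  have hFa (u : ℝ) : F u * a u = G u * a' u := by simpa [hb0, hb0'] using h u 0
  have hFb (u : ℝ) : F u * b u = G u * b' u := by simpa [ha0, ha0'] using h 0 u
  have hFG := eq_cexp_mul_of_eventually_mul hF hG hF0 hG0 (by
    filter_upwards [ha.continuousAt.eventually_ne (by simp [ha0] : a 0 ≠ 0)] with u hu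
    filter_upwards [hb.continuousAt.eventually_ne (by simp [hb0] : b 0 ≠ 0)] with v hv
    apply mul_left_cancel₀ (mul_ne_zero hu hv)
    linear_combination G u * G v * h u v - G (u + v) * (b v * F v * hFa u + G u * a' u * hFb v))
  have hdense : Dense {x | G x ≠ 0} := by
    intro x
    by_contra hx
    have hzero : G =ᶠ[𝓝 x] 0 := by
      filter_upwards [isClosed_closure.isOpen_compl.mem_nhds hx] with y hy
      by_contra hne
      exact hy (subset_closure hne)
    have := congrFun (hG.eq_of_eventuallyEq (g := 0) (fun _ _ => analyticAt_const) hzero) 0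
    simp [hG0] at this
  have cexp_cont : Continuous fun x : ℝ => Complex.exp ((deriv F 0 - deriv G 0) * x) := by
    fun_prop
  have extend {p q : ℝ → ℂ} (hp : Continuous p) (hq : Continuous q)
      (hpq : ∀ x, F x * p x = G x * q x) :
      q = fun x : ℝ => Complex.exp ((deriv F 0 - deriv G 0) * x) * p x := by
    refine Continuous.ext_on hdense hq (cexp_cont.mul hp) fun x hx => ?_
    apply mul_left_cancel₀ hx
    have := hpq x
    rw [hFG x] at this
    linear_combination -this
  exact ⟨hFG u, congrFun (extend ha ha' hFa) u, congrFun (extend hb hb' hFb) u⟩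

open ProbabilityTheory in
/-- If `L` has exponential moments of every order under `μ`, the characteristic function of `μ` is
real-analytic along the line spanned by `L`, with derivative `I * ∫ L` at `0`. -/
theorem analyticOnNhd_charFunDual_smul {E : Type*} [NormedAddCommGroup E] [NormedSpace ℝ E]
    [MeasurableSpace E] [BorelSpace E] {μ : Measure E} (L : StrongDual ℝ E)
    (h : integrableExpSet L μ = Set.univ) :
    AnalyticOnNhd ℝ (fun u : ℝ => charFunDual μ (u • L)) Set.univ ∧
      deriv (fun u : ℝ => charFunDual μ (u • L)) 0 = Complex.I * (∫ x, L x ∂μ : ℝ) := by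
  have heq : (fun u : ℝ => charFunDual μ (u • L)) =
      fun u : ℝ => complexMGF L μ (u * Complex.I) := by
    ext u
    rw [complexMGF_mul_I (by fun_prop), charFun_map_eq_charFunDual_smul]
  rw [heq]
  constructor
  · intro u _
    have h1 : AnalyticAt ℝ (fun u : ℝ => (u : ℂ) * Complex.I) u :=
      (Complex.ofRealCLM.analyticAt u).mul analyticAt_const
    have h2 : AnalyticAt ℂ (complexMGF L μ) ((u : ℂ) * Complex.I) :=
      analyticAt_complexMGF (by simp [h])
    exact h2.restrictScalars.comp (f := fun u : ℝ => (u : ℂ) * Complex.I) h1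
  · have h1 : HasDerivAt (fun u : ℝ => (u : ℂ) * Complex.I) Complex.I 0 := by
      simpa using (Complex.ofRealCLM.hasDerivAt (x := (0 : ℝ))).mul_const Complex.I
    have h2 : HasDerivAt (complexMGF L μ) (∫ x, (L x : ℂ) ∂μ) (((0 : ℝ) : ℂ) * Complex.I) := by
      have := hasDerivAt_complexMGF (X := L) (μ := μ) (z := ((0 : ℝ) : ℂ) * Complex.I) (by simp [h])
      simpa using this
    have h3 := (HasDerivAt.comp (0 : ℝ) h2 h1).deriv
    rw [mul_comm, ← integral_complex_ofReal]
    exact h3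

theorem integrable_exp_of_memM {d : ℕ} {μ : Measure (Fin d → ℝ)} {ρ : ℝ} (h : memM μ ρ)
    (L : StrongDual ℝ (Fin d → ℝ)) : Integrable (fun x => Real.exp (L x)) μ := by
  obtain ⟨A, B, -, -, hAB⟩ := h
  have hL (x : Fin d → ℝ) : L x = ∑ a, L (Pi.single a 1) * x a := by
    conv_lhs => rw [← Finset.univ_sum_single x]
    rw [map_sum]
    refine Finset.sum_congr rfl fun a _ => ?_
    have : Pi.single a (x a) = x a • (Pi.single a 1 : Fin d → ℝ) := by
      rw [← Pi.single_smul, smul_eq_mul, mul_one]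
    rw [this, map_smul, smul_eq_mul, mul_comm]
  refine ⟨by fun_prop, ?_⟩
  rw [hasFiniteIntegral_iff_ofReal (ae_of_all _ fun x => (Real.exp_pos _).le)]
  rw [lintegral_congr fun x => by rw [hL x]]
  exact (hAB fun a => L (Pi.single a 1)).trans_lt ENNReal.ofReal_lt_top

open ProbabilityTheory in
theorem integrableExpSet_of_memM {d : ℕ} {μ : Measure (Fin d → ℝ)} {ρ : ℝ} (h : memM μ ρ)
    (L : StrongDual ℝ (Fin d → ℝ)) : integrableExpSet L μ = Set.univ :=
  Set.eq_univ_of_forall fun t => integrable_exp_of_memM h (t • L)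

open ProbabilityTheory in
theorem integrable_id_of_memM {d : ℕ} {μ : Measure (Fin d → ℝ)} {ρ : ℝ} (h : memM μ ρ) :
    Integrable (fun x => x) μ := by
  refine Integrable.of_eval fun a => ?_
  refine integrable_of_mem_interior_integrableExpSet
    (X := (ContinuousLinearMap.proj a : StrongDual ℝ (Fin d → ℝ))) ?_
  simp [integrableExpSet_of_memM h]

theorem charFunDual_mconv_diag {E : Type*} [NormedAddCommGroup E] [NormedSpace ℝ E]
    [MeasurableSpace E] [BorelSpace E] [SecondCountableTopology E] (R Q₁ Q₂ : Measure E)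
    [IsProbabilityMeasure R] [IsProbabilityMeasure Q₁] [IsProbabilityMeasure Q₂]
    (L₁ L₂ : StrongDual ℝ E) :
    charFunDual (mconv (R.map (fun x => (x, x))) (Q₁.prod Q₂)) (L₁.coprod L₂) =
      charFunDual R (L₁ + L₂) * (charFunDual Q₁ L₁ * charFunDual Q₂ L₂) := by
  have : IsProbabilityMeasure (R.map (fun x => (x, x))) :=
    Measure.isProbabilityMeasure_map (by fun_prop)
  have hdiag := charFunDual_map (μ := R)
    ((ContinuousLinearMap.id ℝ E).prod (ContinuousLinearMap.id ℝ E)) (L₁.coprod L₂)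
  have hcomp : (L₁.coprod L₂).comp
      ((ContinuousLinearMap.id ℝ E).prod (ContinuousLinearMap.id ℝ E)) = L₁ + L₂ := by
    ext x; simp
  rw [hcomp] at hdiag
  have hconv := charFunDual_conv (μ := R.map (fun x => (x, x))) (ν := Q₁.prod Q₂) (L₁.coprod L₂)
  rw [charFunDual_prod, ContinuousLinearMap.coprod_comp_inl,
    ContinuousLinearMap.coprod_comp_inr] at hconv
  exact hconv.trans (congrArg (· * _) hdiag)

theorem charFunDual_zero_eq_one {E : Type*} [NormedAddCommGroup E] [NormedSpace ℝ E]
    [MeasurableSpace E] (μ : Measure E) [IsProbabilityMeasure μ] : charFunDual μ 0 = 1 := by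
  simp [charFunDual_apply]

theorem continuous_charFunDual_smul {E : Type*} [NormedAddCommGroup E] [NormedSpace ℝ E]
    [MeasurableSpace E] [BorelSpace E] (μ : Measure E) [IsProbabilityMeasure μ]
    (L : StrongDual ℝ E) : Continuous fun u : ℝ => charFunDual μ (u • L) := by
  have : IsProbabilityMeasure (μ.map L) := Measure.isProbabilityMeasure_map (by fun_prop)
  simp_rw [← charFun_map_eq_charFunDual_smul]
  fun_prop

theorem stmt2 (d1 : ℕ) (hd1 : 1 ≤ d1)
    (R1 Rt1 : Measure (Fin d1 → ℝ))
    [IsProbabilityMeasure R1] [IsProbabilityMeasure Rt1]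
    (ρ : ℝ) (hρ : ρ < 2) (hR1 : memM R1 ρ) (hRt1 : memM Rt1 ρ)
    (Q1 Qt1 Q2 Qt2 : Measure (Fin d1 → ℝ))
    [IsProbabilityMeasure Q1] [IsProbabilityMeasure Qt1]
    [IsProbabilityMeasure Q2] [IsProbabilityMeasure Qt2]
    (heq : mconv (R1.map (fun x => (x, x))) (Q1.prod Q2) =
           mconv (Rt1.map (fun x => (x, x))) (Qt1.prod Qt2)) :
    ∃ m1 m2 : Fin d1 → ℝ,
      Rt1.map (fun x => (x, x)) =
        (R1.map (fun x => (x, x))).map (fun x => (x.1 - m1, x.2 - m2)) ∧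
      Qt1 = Q1.map (fun y => y + m1) ∧
      Qt2 = Q2.map (fun y => y + m2) := by
  set m : Fin d1 → ℝ := (∫ x, x ∂ R1) - ∫ x, x ∂ Rt1 with hm
  have key (L : StrongDual ℝ (Fin d1 → ℝ)) :
      charFunDual R1 L = Complex.exp (L m * Complex.I) * charFunDual Rt1 L ∧
        charFunDual Qt1 L = Complex.exp (L m * Complex.I) * charFunDual Q1 L ∧
        charFunDual Qt2 L = Complex.exp (L m * Complex.I) * charFunDual Q2 L := by
    obtain ⟨aR, dR⟩ := analyticOnNhd_charFunDual_smul L (integrableExpSet_of_memM hR1 L)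
    obtain ⟨aRt, dRt⟩ := analyticOnNhd_charFunDual_smul L (integrableExpSet_of_memM hRt1 L)
    have hfac := exp_factors_of_mul_eq aR aRt
      (continuous_charFunDual_smul Q1 L) (continuous_charFunDual_smul Q2 L)
      (continuous_charFunDual_smul Qt1 L) (continuous_charFunDual_smul Qt2 L)
      (by simp [charFunDual_zero_eq_one]) (by simp [charFunDual_zero_eq_one])
      (by simp [charFunDual_zero_eq_one]) (by simp [charFunDual_zero_eq_one])
      (by simp [charFunDual_zero_eq_one]) (by simp [charFunDual_zero_eq_one])
      (fun u v => by
        rw [add_smul, ← charFunDual_mconv_diag, ← charFunDual_mconv_diag, heq]) 1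
    have hexp : (Complex.I * (∫ x, L x ∂ R1 : ℝ) - Complex.I * (∫ x, L x ∂ Rt1 : ℝ)) *
        ((1 : ℝ) : ℂ) = L m * Complex.I := by
      rw [L.integral_comp_comm (integrable_id_of_memM hR1),
        L.integral_comp_comm (integrable_id_of_memM hRt1), hm, map_sub]
      push_cast
      ring
    rw [dR, dRt, hexp] at hfac
    simpa only [one_smul] using hfac
  have translate {μ ν : Measure (Fin d1 → ℝ)} [IsProbabilityMeasure μ] [IsProbabilityMeasure ν]
      (h : ∀ L, charFunDual ν L = Complex.exp (L m * Complex.I) * charFunDual μ L) :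
      ν = μ.map (fun y => y + m) := by
    have : IsProbabilityMeasure (μ.map (fun y => y + m)) :=
      Measure.isProbabilityMeasure_map (by fun_prop)
    refine Measure.ext_of_charFunDual (funext fun L => ?_)
    rw [h, charFunDual_map_add_const, mul_comm]
  refine ⟨m, m, ?_, translate fun L => (key L).2.1, translate fun L => (key L).2.2⟩
  rw [translate fun L => (key L).1, Measure.map_map (by fun_prop) (by fun_prop),
    Measure.map_map (by fun_prop) (by fun_prop)]
  congr 1
  ext x <;> simp

end Stmt2
end

section
/- Let κ ∈ (0, 1), c, T > 0 and τ ≥ 0. Then there exists x₀ > 0 such that the following holds. Define h_κ(x) = c_h · exp(−(√((1 + (x/x₀)²)/2))^{1/(1−κ)}), where c_h > 0 is the constant making h_κ a probability density on ℝ. Let u(x) = c_u · exp(−1/(1 − x²)) · 1_{[−1,1]}(x) with c_u the normalizing constant, and u_b(x) = b·u(bx) for b > 0. Then for every b ≥ 1/x₀ and every probability density ζ on ℝ such that ζ(x) ≤ c · ([y ↦ h_κ(y)·(1 + (y/x₀)²)^τ] * u_b)(x) for all x ∈ ℝ, the moments of ζ satisfy, for every integer j ≥ 1, ∫_ℝ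 |x|^j · ζ(x) dx ≤ j! · T^j · j^{−κj}; in particular, the characteristic function of ζ belongs to Υ_{κ,T}. -/
/- STATEMENT 19: for κ ∈ (0,1), c, T > 0, τ ≥ 0, there exists x₀ > 0 such that every
   probability density ζ dominated by c · ([h_κ · (1+(·/x₀)²)^τ] * u_b), b ≥ 1/x₀, has
   moments ∫ |x|^j ζ(x) dx ≤ j! T^j j^{−κj} for all j ≥ 1 (which expresses that its
   characteristic function belongs to Υ_{κ,T}). -/

namespace Stmt19

open MeasureTheory

/-- The unnormalized density exp(−(√((1+(x/x₀)²)/2))^{1/(1−κ)}). -/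
noncomputable def Hfun (κ x0 : ℝ) (x : ℝ) : ℝ :=
  Real.exp (-(Real.sqrt ((1 + (x / x0) ^ 2) / 2)) ^ (1 / (1 - κ)))

/-- h_κ, the normalized version of Hfun. -/
noncomputable def hdens (κ x0 : ℝ) (x : ℝ) : ℝ :=
  (∫ y, Hfun κ x0 y)⁻¹ * Hfun κ x0 x

/-- The unnormalized bump exp(−1/(1−x²)) on (−1,1). -/
noncomputable def Ufun (x : ℝ) : ℝ :=
  Set.indicator (Set.Ioo (-1 : ℝ) 1) (fun y => Real.exp (-1 / (1 - y ^ 2))) x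

/-- u, the normalized bump density. -/
noncomputable def udens (x : ℝ) : ℝ := (∫ y, Ufun y)⁻¹ * Ufun x

/-- u_b(x) = b u(bx). -/
noncomputable def ub (b x : ℝ) : ℝ := b * udens (b * x)

/-- Convolution of two functions on ℝ. -/
noncomputable def fconv (f g : ℝ → ℝ) (x : ℝ) : ℝ := ∫ y, f y * g (x - y)

lemma rpow_mul_exp_neg_half_le {v a : ℝ} (hv : 0 ≤ v) (ha : 0 < a) :
    v ^ a * Real.exp (-(v / 2)) ≤ (2 * a) ^ a := by
  have h1 : v ≤ 2 * a * Real.exp (v / (2 * a)) := by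
    have h := Real.add_one_le_exp (v / (2 * a))
    calc v = 2 * a * (v / (2 * a)) := by field_simp
      _ ≤ _ := by gcongr; linarith
  have h2 : v ^ a ≤ (2 * a) ^ a * Real.exp (v / 2) := by
    calc v ^ a ≤ (2 * a * Real.exp (v / (2 * a))) ^ a := by gcongr
      _ = (2 * a) ^ a * Real.exp (v / 2) := by
        rw [Real.mul_rpow (by positivity) (by positivity), ← Real.exp_mul]
        congr 2
        field_simp
  rw [Real.exp_neg, ← div_eq_mul_inv, div_le_iff₀ (Real.exp_pos _)]
  exact h2

lemma rpow_mul_exp_neg_half_rpow_le {w p q : ℝ} (hw : 0 ≤ w) (hp : 0 < p) (hq : 0 < q) :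
    w ^ q * Real.exp (-(w ^ p / 2)) ≤ (2 * (q / p)) ^ (q / p) := by
  have h := rpow_mul_exp_neg_half_le (Real.rpow_nonneg hw p) (div_pos hq hp)
  rwa [← Real.rpow_mul hw, mul_div_cancel₀ q hp.ne'] at h

/-- The weight √((1+t²)/2). -/
noncomputable def weight (t : ℝ) : ℝ := Real.sqrt ((1 + t ^ 2) / 2)

lemma weight_nonneg (t : ℝ) : 0 ≤ weight t := Real.sqrt_nonneg _

lemma weight_sq (t : ℝ) : weight t ^ 2 = (1 + t ^ 2) / 2 := Real.sq_sqrt (by positivity)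

lemma continuous_weight : Continuous weight := by
  unfold weight; fun_prop

lemma one_add_abs_le_two_mul_weight (t : ℝ) : 1 + |t| ≤ 2 * weight t := by
  refine abs_le_of_sq_le_sq' ?_ (by have := weight_nonneg t; positivity) |>.2
  rw [mul_pow, weight_sq]
  nlinarith [sq_nonneg (1 - |t|), sq_abs t]

/-- The integrable majorant (1+t²)^τ exp(−w(t)^p/2). -/
noncomputable def majorant (τ p t : ℝ) : ℝ :=
  (1 + t ^ 2) ^ τ * Real.exp (-(weight t ^ p / 2))

lemma majorant_nonneg (τ p t : ℝ) : 0 ≤ majorant τ p t := by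
  unfold majorant; positivity

lemma continuous_majorant (τ : ℝ) {p : ℝ} (hp : 0 < p) : Continuous (majorant τ p) := by
  unfold majorant
  refine Continuous.mul ?_ ?_
  · exact Continuous.rpow_const (by fun_prop) fun t => Or.inl (by positivity)
  · have : Continuous fun t => weight t ^ p :=
      continuous_weight.rpow_const fun _ => Or.inr hp.le
    fun_prop

lemma integrable_majorant {τ p : ℝ} (hτ : 0 ≤ τ) (hp : 0 < p) : Integrable (majorant τ p) := by
  set q : ℝ := 2 * (τ + 1) with hq
  have hq0 : 0 < q := by positivity
  refine (integrable_inv_one_add_sq.const_mul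
    (2 ^ (τ + 1) * (2 * (q / p)) ^ (q / p))).mono'
    (continuous_majorant τ hp).aestronglyMeasurable (ae_of_all _ fun t => ?_)
  rw [Real.norm_of_nonneg (majorant_nonneg _ _ _)]
  have h := rpow_mul_exp_neg_half_rpow_le (weight_nonneg t) hp hq0
  have hs : weight t ^ q = ((1 + t ^ 2) / 2) ^ (τ + 1) := by
    rw [hq, Real.rpow_mul (weight_nonneg t), Real.rpow_two, weight_sq]
  have ht : (0 : ℝ) < 1 + t ^ 2 := by positivity
  have he : (1 + t ^ 2) ^ (τ + 1) = 2 ^ (τ + 1) * weight t ^ q := by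
    rw [hs, ← Real.mul_rpow (by positivity) (by positivity)]
    congr 1
    ring
  rw [← div_eq_mul_inv, le_div_iff₀ ht]
  calc majorant τ p t * (1 + t ^ 2)
      = (1 + t ^ 2) ^ (τ + 1) * Real.exp (-(weight t ^ p / 2)) := by
        rw [majorant, Real.rpow_add_one ht.ne']; ring
    _ = 2 ^ (τ + 1) * (weight t ^ q * Real.exp (-(weight t ^ p / 2))) := by rw [he]; ring
    _ ≤ _ := by gcongr

lemma Ufun_nonneg (x : ℝ) : 0 ≤ Ufun x :=
  Set.indicator_nonneg (fun _ _ => (Real.exp_pos _).le) x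

lemma measurable_Ufun : Measurable Ufun := by
  unfold Ufun
  exact Measurable.indicator (by fun_prop) measurableSet_Ioo

lemma integrable_Ufun : Integrable Ufun := by
  have h1 : Integrable (Set.indicator (Set.Ioo (-1 : ℝ) 1) fun _ => (1 : ℝ)) :=
    (integrable_indicator_iff measurableSet_Ioo).2 (by simp)
  refine h1.mono' measurable_Ufun.aestronglyMeasurable (ae_of_all _ fun x => ?_)
  rw [Real.norm_of_nonneg (Ufun_nonneg x)]
  refine Set.indicator_le_indicator' fun hx => ?_
  rw [Real.exp_le_one_iff]
  exact div_nonpos_of_nonpos_of_nonneg (by norm_num) (by nlinarith [hx.1, hx.2])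

lemma udens_nonneg (x : ℝ) : 0 ≤ udens x :=
  mul_nonneg (inv_nonneg.2 (integral_nonneg Ufun_nonneg)) (Ufun_nonneg x)

lemma measurable_udens : Measurable udens := measurable_Ufun.const_mul _

lemma measurable_ub (b : ℝ) : Measurable (ub b) :=
  (measurable_udens.comp (measurable_const_mul b)).const_mul b

lemma ub_nonneg {b : ℝ} (hb : 0 ≤ b) (x : ℝ) : 0 ≤ ub b x := mul_nonneg hb (udens_nonneg _)

lemma ub_eq_zero {b x : ℝ} (hb : 0 < b) (hx : b⁻¹ ≤ |x|) : ub b x = 0 := by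
  have : b * x ∉ Set.Ioo (-1 : ℝ) 1 := by
    rw [Set.mem_Ioo, ← abs_lt, abs_mul, abs_of_pos hb, not_lt]
    exact (inv_le_iff_one_le_mul₀' hb).1 hx
  simp [ub, udens, Ufun, Set.indicator_of_notMem this]

lemma integrable_ub {b : ℝ} (hb : 0 < b) : Integrable (ub b) :=
  ((integrable_Ufun.const_mul _).comp_mul_left' hb.ne').const_mul b

lemma integral_ub_le_one {b : ℝ} (hb : 0 < b) : ∫ x, ub b x ≤ 1 := by
  have h : ∫ x, ub b x = ∫ x, udens x := by
    simp only [ub]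
    rw [integral_const_mul, Measure.integral_comp_mul_left, abs_of_pos (inv_pos.2 hb),
      smul_eq_mul, mul_inv_cancel_left₀ hb.ne']
  rw [h]
  simp only [udens]
  rw [integral_const_mul]
  exact inv_mul_le_one

lemma lintegral_ub_sub_le_one {b : ℝ} (hb : 0 < b) (y : ℝ) :
    ∫⁻ x, ENNReal.ofReal (ub b (x - y)) ≤ 1 := by
  rw [lintegral_sub_right_eq_self (fun x => ENNReal.ofReal (ub b x)) y,
    ← ofReal_integral_eq_lintegral_ofReal (integrable_ub hb)
      (ae_of_all _ (ub_nonneg hb.le))]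
  exact ENNReal.ofReal_le_one.2 (integral_ub_le_one hb)

/-- Moments of a function dominated by a convolution with `ub b` are controlled by the integral of
any `N` that dominates the weighted integrand. -/
lemma lintegral_mul_le_of_le_fconv {b c D : ℝ} (hb : 0 < b) (hc : 0 ≤ c) {ζ f g N : ℝ → ℝ}
    (hD : 0 ≤ D) (hg : ∀ x, 0 ≤ g x) (hf : ∀ y, 0 ≤ f y)
    (hN : Measurable N) (hNint : Integrable N) (hN0 : ∀ y, 0 ≤ N y)
    (hζ : ∀ x, ζ x ≤ c * fconv f (ub b) x)
    (hdom : ∀ x y, g x * (f y * ub b (x - y)) ≤ D * N y * ub b (x - y)) :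
    ∫⁻ x, ENNReal.ofReal (g x * ζ x) ≤ ENNReal.ofReal (c * D * ∫ y, N y) := by
  have hpt : ∀ x, ENNReal.ofReal (g x * ζ x) ≤
      ∫⁻ y, ENNReal.ofReal (c * D * N y) * ENNReal.ofReal (ub b (x - y)) := by
    intro x
    calc ENNReal.ofReal (g x * ζ x)
        ≤ ENNReal.ofReal (∫ y, c * (g x * (f y * ub b (x - y)))) := by
          refine ENNReal.ofReal_le_ofReal ?_
          rw [integral_const_mul, integral_const_mul]
          calc g x * ζ x ≤ g x * (c * fconv f (ub b) x) :=
                mul_le_mul_of_nonneg_left (hζ x) (hg x)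
            _ = _ := by rw [fconv]; ring
      _ ≤ ∫⁻ y, ENNReal.ofReal (c * (g x * (f y * ub b (x - y)))) := by
          have h0 : ∀ y, 0 ≤ c * (g x * (f y * ub b (x - y))) := fun y =>
            mul_nonneg hc (mul_nonneg (hg x) (mul_nonneg (hf y) (ub_nonneg hb.le _)))
          have h := enorm_integral_le_lintegral_enorm
            (μ := volume) fun y => c * (g x * (f y * ub b (x - y)))
          rw [Real.enorm_of_nonneg (integral_nonneg h0)] at h
          refine h.trans_eq (lintegral_congr fun y => ?_)
          rw [Real.enorm_of_nonneg (h0 y)]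
      _ ≤ _ := by
          refine lintegral_mono fun y => ?_
          rw [← ENNReal.ofReal_mul (mul_nonneg (mul_nonneg hc hD) (hN0 y))]
          refine ENNReal.ofReal_le_ofReal ?_
          calc c * (g x * (f y * ub b (x - y))) ≤ c * (D * N y * ub b (x - y)) :=
                mul_le_mul_of_nonneg_left (hdom x y) hc
            _ = _ := by ring
  have hmeas : Measurable (ub b) := measurable_ub b
  calc ∫⁻ x, ENNReal.ofReal (g x * ζ x)
      ≤ ∫⁻ x, ∫⁻ y, ENNReal.ofReal (c * D * N y) * ENNReal.ofReal (ub b (x - y)) :=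
        lintegral_mono hpt
    _ = ∫⁻ y, ∫⁻ x, ENNReal.ofReal (c * D * N y) * ENNReal.ofReal (ub b (x - y)) := by
        refine lintegral_lintegral_swap (Measurable.aemeasurable ?_)
        fun_prop
    _ ≤ ∫⁻ y, ENNReal.ofReal (c * D * N y) := by
        refine lintegral_mono fun y => ?_
        rw [lintegral_const_mul _ (by fun_prop)]
        exact mul_le_of_le_one_right' (lintegral_ub_sub_le_one hb y)
    _ = ENNReal.ofReal (c * D * ∫ y, N y) := by
        rw [← integral_const_mul, ofReal_integral_eq_lintegral_ofReal (hNint.const_mul _)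
          (ae_of_all _ fun y => mul_nonneg (mul_nonneg hc hD) (hN0 y))]

lemma Hfun_eq (κ x0 y : ℝ) :
    Hfun κ x0 y = Real.exp (-(weight (y / x0) ^ (1 / (1 - κ)))) := rfl

lemma Hfun_nonneg (κ x0 y : ℝ) : 0 ≤ Hfun κ x0 y := (Real.exp_pos _).le

lemma integral_Hfun {x0 : ℝ} (hx0 : 0 < x0) (κ : ℝ) :
    ∫ y, Hfun κ x0 y = x0 * ∫ y, Hfun κ 1 y := by
  have h := Measure.integral_comp_div (Hfun κ 1) x0
  rw [abs_of_pos hx0, smul_eq_mul] at h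
  rw [← h]
  simp only [Hfun, div_one]

lemma pow_mul_Hfun_le {κ x0 x y τ : ℝ} (hκ0 : 0 < κ) (hκ1 : κ < 1) (hx0 : 0 < x0)
    (hxy : |x - y| ≤ x0) {j : ℕ} (hj : 1 ≤ j) :
    |x| ^ j * (Hfun κ x0 y * (1 + (y / x0) ^ 2) ^ τ) ≤
      (4 * x0) ^ j * (j : ℝ) ^ ((j : ℝ) * (1 - κ)) * majorant τ (1 / (1 - κ)) (y / x0) := by
  have hκ : 0 < 1 - κ := by linarith
  have hj0 : (1 : ℝ) ≤ j := by exact_mod_cast hj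
  set t := y / x0 with ht
  set p := 1 / (1 - κ) with hp
  have hp0 : 0 < p := by positivity
  have hw := weight_nonneg t
  have hx : |x| ≤ 2 * x0 * weight t := by
    have h1 : |x| ≤ |x - y| + |y| := by
      simpa using abs_add_le (x - y) y
    have h2 : |y| = x0 * |t| := by
      rw [ht, abs_div, abs_of_pos hx0]; field_simp
    nlinarith [one_add_abs_le_two_mul_weight t]
  have hbase : weight t ^ j * Real.exp (-(weight t ^ p / 2)) ≤
      2 ^ j * (j : ℝ) ^ ((j : ℝ) * (1 - κ)) := by
    have h := rpow_mul_exp_neg_half_rpow_le hw hp0 (q := j) (by linarith)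
    have hjp : (j : ℝ) / p = j * (1 - κ) := by rw [hp]; field_simp
    rw [Real.rpow_natCast, hjp] at h
    refine h.trans ?_
    have hle : (j : ℝ) * (1 - κ) ≤ j := by nlinarith
    calc (2 * ((j : ℝ) * (1 - κ))) ^ ((j : ℝ) * (1 - κ))
        ≤ (2 * (j : ℝ)) ^ ((j : ℝ) * (1 - κ)) := by gcongr
      _ = 2 ^ ((j : ℝ) * (1 - κ)) * (j : ℝ) ^ ((j : ℝ) * (1 - κ)) :=
          Real.mul_rpow (by norm_num) (by positivity)
      _ ≤ 2 ^ (j : ℝ) * (j : ℝ) ^ ((j : ℝ) * (1 - κ)) := by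
          gcongr
          norm_num
      _ = _ := by rw [Real.rpow_natCast]
  have hexp : Hfun κ x0 y =
      Real.exp (-(weight t ^ p / 2)) * Real.exp (-(weight t ^ p / 2)) := by
    rw [Hfun_eq, ← Real.exp_add]
    congr 1
    ring
  calc |x| ^ j * (Hfun κ x0 y * (1 + t ^ 2) ^ τ)
      ≤ (2 * x0 * weight t) ^ j * (Hfun κ x0 y * (1 + t ^ 2) ^ τ) := by
        have := Hfun_nonneg κ x0 y
        gcongr
    _ = (2 * x0) ^ j * (weight t ^ j * Real.exp (-(weight t ^ p / 2))) * majorant τ p t := by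
        rw [hexp, majorant, mul_pow (2 * x0)]; ring
    _ ≤ (2 * x0) ^ j * (2 ^ j * (j : ℝ) ^ ((j : ℝ) * (1 - κ))) * majorant τ p t := by
        have := majorant_nonneg τ p t
        gcongr
    _ = _ := by
        rw [show 4 * x0 = 2 * x0 * 2 by ring, mul_pow (2 * x0) 2]; ring

lemma rpow_mul_one_sub_le {j : ℕ} (hj : 1 ≤ j) (κ : ℝ) :
    (j : ℝ) ^ ((j : ℝ) * (1 - κ)) ≤
      (Nat.factorial j : ℝ) * Real.exp 1 ^ j * (j : ℝ) ^ (-(κ * (j : ℝ))) := by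
  have hj0 : (0 : ℝ) < j := by exact_mod_cast hj
  rw [show (j : ℝ) * (1 - κ) = (j : ℝ) + -(κ * j) by ring, Real.rpow_add hj0, Real.rpow_natCast]
  gcongr
  have h := Real.pow_div_factorial_le_exp (j : ℝ) hj0.le j
  rw [div_le_iff₀ (by positivity)] at h
  rw [← Real.exp_nat_mul, mul_one]
  linarith

theorem stmt19 (κ : ℝ) (hκ0 : 0 < κ) (hκ1 : κ < 1) (c T : ℝ) (hc : 0 < c) (hT : 0 < T)
    (τ : ℝ) (hτ : 0 ≤ τ) :
    ∃ x0 : ℝ, 0 < x0 ∧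
      ∀ b : ℝ, 1 / x0 ≤ b →
      ∀ ζ : ℝ → ℝ, Measurable ζ → (∀ x, 0 ≤ ζ x) → (∫ x, ζ x) = 1 →
        (∀ x : ℝ, ζ x ≤
          c * fconv (fun y => hdens κ x0 y * (1 + (y / x0) ^ 2) ^ τ) (ub b) x) →
        ∀ j : ℕ, 1 ≤ j →
          Integrable (fun x => |x| ^ j * ζ x) ∧
          (∫ x, |x| ^ j * ζ x) ≤
            (Nat.factorial j : ℝ) * T ^ j * (j : ℝ) ^ (-(κ * (j : ℝ))) := by
  have hκ : 0 < 1 - κ := by linarith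
  set p := 1 / (1 - κ) with hp
  have hp0 : 0 < p := by positivity
  set I := ∫ y, Hfun κ 1 y with hI
  have hI0 : 0 ≤ I := integral_nonneg (Hfun_nonneg κ 1)
  set M := ∫ y, majorant τ p y with hM
  set K := max (c * (I⁻¹ * M)) 1 with hK
  have hK1 : 1 ≤ K := le_max_right _ _
  have hK0 : 0 < K := by linarith
  set x0 := T / (4 * Real.exp 1 * K) with hx
  have hx0 : 0 < x0 := by positivity
  refine ⟨x0, hx0, fun b hb ζ hζm hζ0 _ hζ j hj => ?_⟩
  have hb0 : 0 < b := lt_of_lt_of_le (by positivity) hb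
  set N : ℝ → ℝ := fun y => (x0 * I)⁻¹ * majorant τ p (y / x0) with hN
  set D := (4 * x0) ^ j * (j : ℝ) ^ ((j : ℝ) * (1 - κ)) with hD
  have hD0 : 0 ≤ D := by positivity
  have hNint : ∫ y, N y = I⁻¹ * M := by
    rw [hN, integral_const_mul, Measure.integral_comp_div, abs_of_pos hx0, smul_eq_mul, ← hM, mul_inv]
    field_simp
  have key := lintegral_mul_le_of_le_fconv (D := D) (g := fun x => |x| ^ j) (N := N)
    (f := fun y => hdens κ x0 y * (1 + (y / x0) ^ 2) ^ τ) hb0 hc.le hD0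
    (fun x => by positivity)
    (fun y => mul_nonneg (mul_nonneg (inv_nonneg.2 (integral_nonneg (Hfun_nonneg κ x0)))
      (Hfun_nonneg κ x0 y)) (by positivity))
    (((continuous_majorant τ hp0).measurable.comp (measurable_id.div_const x0)).const_mul _)
    (((integrable_majorant hτ hp0).comp_div hx0.ne').const_mul _)
    (fun y => mul_nonneg (by positivity) (majorant_nonneg _ _ _)) hζ ?_
  · have hnn : ∀ x, 0 ≤ |x| ^ j * ζ x := fun x => mul_nonneg (by positivity) (hζ0 x)
    have hmeas : AEStronglyMeasurable (fun x => |x| ^ j * ζ x) volume :=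
      (by fun_prop : Measurable fun x => |x| ^ j * ζ x).aestronglyMeasurable
    have hM0 : 0 ≤ M := integral_nonneg (majorant_nonneg τ p)
    refine ⟨⟨hmeas, ?_⟩, ?_⟩
    · rw [hasFiniteIntegral_iff_ofReal (ae_of_all _ hnn)]
      exact key.trans_lt ENNReal.ofReal_lt_top
    · rw [integral_eq_lintegral_of_nonneg_ae (ae_of_all _ hnn) hmeas]
      refine ENNReal.toReal_le_of_le_ofReal (by positivity) (key.trans ?_)
      refine ENNReal.ofReal_le_ofReal ?_
      rw [hNint]
      have hKj : c * (I⁻¹ * M) ≤ K ^ j := (le_max_left _ _).trans (le_self_pow₀ hK1 (by omega))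
      calc c * D * (I⁻¹ * M) = c * (I⁻¹ * M) * D := by ring
        _ ≤ K ^ j * ((4 * x0) ^ j * ((Nat.factorial j : ℝ) * Real.exp 1 ^ j *
              (j : ℝ) ^ (-(κ * (j : ℝ))))) := by
            rw [hD]
            gcongr
            exact rpow_mul_one_sub_le hj κ
        _ = (Nat.factorial j : ℝ) * (4 * Real.exp 1 * K * x0) ^ j *
              (j : ℝ) ^ (-(κ * (j : ℝ))) := by
            simp only [mul_pow]; ring
        _ = _ := by rw [hx, mul_div_cancel₀ T (by positivity)]
  · intro x y
    by_cases hxy : |x - y| ≤ x0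
    · have h := pow_mul_Hfun_le (τ := τ) hκ0 hκ1 hx0 hxy hj
      rw [← mul_assoc]
      refine mul_le_mul_of_nonneg_right ?_ (ub_nonneg hb0.le _)
      rw [hdens, integral_Hfun hx0, ← hI]
      calc |x| ^ j * ((x0 * I)⁻¹ * Hfun κ x0 y * (1 + (y / x0) ^ 2) ^ τ)
          = (x0 * I)⁻¹ * (|x| ^ j * (Hfun κ x0 y * (1 + (y / x0) ^ 2) ^ τ)) := by ring
        _ ≤ (x0 * I)⁻¹ * (D * majorant τ p (y / x0)) := by gcongr
        _ = D * N y := by rw [hN]; ring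
    · have hbx : b⁻¹ ≤ x0 := by
        rw [one_div] at hb
        exact inv_le_of_inv_le₀ hx0 hb
      rw [ub_eq_zero hb0 (hbx.trans (not_le.1 hxy).le)]
      simp

end Stmt19
end
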